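/- arXiv:2311.10575 — 9 statements merged into one kernel-verified Lean document; each statement's English description precedes it below -/
import Mathlib

section
/- Let σ > 0 and define J(ξ) = φ(ξ) − φ(σ) − (φ(σ)/σ²)(ξ² − σ²). Then J(ξ) > 0 for every ξ ∈ (0,σ). -/
open Set

/-- The function `φ(ξ) = ξ(√(1+ξ²) − ξ)`. -/
noncomputable def phi (ξ : ℝ) : ℝ := ξ * (Real.sqrt (1 + ξ ^ 2) - ξ)

/-! Factoring out `ξ²` gives `J(ξ) = ξ² (φ(ξ)/ξ² − φ(σ)/σ²)`, and the ratio
`φ(ξ)/ξ² = √(1 + ξ⁻²) − 1` is strictly decreasing on `(0, ∞)`. -/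

theorem sqrt_one_add_sq_eq_mul_sqrt {x : ℝ} (hx : 0 < x) :
    √(1 + x ^ 2) = x * √(1 + (x ^ 2)⁻¹) := by
  calc √(1 + x ^ 2) = √(x ^ 2 * (1 + (x ^ 2)⁻¹)) := by
        rw [mul_add, mul_one, mul_inv_cancel₀ (pow_ne_zero 2 hx.ne'), add_comm]
    _ = x * √(1 + (x ^ 2)⁻¹) := by rw [Real.sqrt_mul (sq_nonneg x), Real.sqrt_sq hx.le]

theorem phi_div_sq {ξ : ℝ} (hξ : 0 < ξ) : phi ξ / ξ ^ 2 = √(1 + (ξ ^ 2)⁻¹) - 1 := by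
  rw [phi, sqrt_one_add_sq_eq_mul_sqrt hξ, div_eq_iff (pow_ne_zero 2 hξ.ne')]
  ring

theorem strictAntiOn_phi_div_sq : StrictAntiOn (fun ξ ↦ phi ξ / ξ ^ 2) (Ioi 0) := by
  intro ξ (hξ : 0 < ξ) σ (hσ : 0 < σ) hξσ
  simp only [phi_div_sq hξ, phi_div_sq hσ]
  gcongr

theorem sub_sub_div_mul_sub {K : Type*} [Field K] (a b : K) {s t : K} (hs : s ≠ 0) (ht : t ≠ 0) :
    a - b - b / t * (s - t) = s * (a / s - b / t) := by
  field_simp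
  ring

/-- For `σ > 0`, the function `J(ξ) = φ(ξ) − φ(σ) − (φ(σ)/σ²)(ξ² − σ²)` is positive
on `(0, σ)`. -/
theorem J_pos (σ : ℝ) (hσ : 0 < σ) :
    ∀ ξ ∈ Set.Ioo (0 : ℝ) σ,
      0 < phi ξ - phi σ - (phi σ / σ ^ 2) * (ξ ^ 2 - σ ^ 2) := by
  rintro ξ ⟨hξ, hξσ⟩
  have ratio_lt : phi σ / σ ^ 2 < phi ξ / ξ ^ 2 := strictAntiOn_phi_div_sq hξ hσ hξσ
  rw [sub_sub_div_mul_sub _ _ (pow_ne_zero 2 hξ.ne') (pow_ne_zero 2 hσ.ne')]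
  exact mul_pos (pow_pos hξ 2) (sub_pos.mpr ratio_lt)
end

section
/- Let 0 < σ₁ < σ₂ and define J(ξ) = φ(ξ) − φ(σ₁) − ((φ(σ₂) − φ(σ₁))/(σ₂² − σ₁²))·(ξ² − σ₁²). Then J(ξ) > 0 for every ξ ∈ (σ₁, σ₂). -/
open Set

/-!
In the variable `u = ξ²` the function `φ` becomes `√(u(u + 1)) − u`, which is strictly concave
because the geometric mean is strictly superadditive on non-proportional pairs. Up to a positive
factor, `J(ξ)` is the slope of this function from `σ₁²` to `ξ²` minus its slope from `σ₁²` to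
`σ₂²`, so it is positive.
-/

theorem sqrt_mul_add_sqrt_mul_lt {x y z w : ℝ} (hx : 0 ≤ x) (hy : 0 ≤ y) (hz : 0 ≤ z)
    (hw : 0 ≤ w) (hne : x * w ≠ y * z) :
    √(x * y) + √(z * w) < √((x + z) * (y + w)) := by
  have hcross : √x * √w - √y * √z ≠ 0 := by
    rwa [sub_ne_zero, ← Real.sqrt_mul hx, ← Real.sqrt_mul hy, Ne,
      Real.sqrt_inj (mul_nonneg hx hw) (mul_nonneg hy hz)]
  have lagrange : (√x * √y + √z * √w) ^ 2 + (√x * √w - √y * √z) ^ 2 = (x + z) * (y + w) :=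
    calc (√x * √y + √z * √w) ^ 2 + (√x * √w - √y * √z) ^ 2
        = (√x ^ 2 + √z ^ 2) * (√y ^ 2 + √w ^ 2) := by ring
      _ = (x + z) * (y + w) := by
        rw [Real.sq_sqrt hx, Real.sq_sqrt hy, Real.sq_sqrt hz, Real.sq_sqrt hw]
  rw [Real.sqrt_mul hx, Real.sqrt_mul hz]
  apply Real.lt_sqrt_of_sq_lt
  rw [← lagrange]
  exact lt_add_of_pos_right _ (sq_pos_of_ne_zero hcross)

theorem strictConcaveOn_sqrt_mul_add {c : ℝ} (hc : 0 < c) :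
    StrictConcaveOn ℝ (Ici 0) fun u : ℝ ↦ √(u * (u + c)) := by
  refine ⟨convex_Ici 0, fun u (hu : 0 ≤ u) v (hv : 0 ≤ v) huv a b ha hb hab ↦ ?_⟩
  have hne : (a * u) * (b * (v + c)) ≠ (a * (u + c)) * (b * v) := by
    have hdiff : (a * u) * (b * (v + c)) - (a * (u + c)) * (b * v) = a * b * c * (u - v) := by
      ring
    rw [← sub_ne_zero, hdiff]
    exact mul_ne_zero (by positivity) (sub_ne_zero.mpr huv)
  have sqrt_scale {t x : ℝ} (ht : 0 < t) : √(t * x * (t * (x + c))) = t * √(x * (x + c)) := by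
    rw [show t * x * (t * (x + c)) = t ^ 2 * (x * (x + c)) by ring,
      Real.sqrt_mul (sq_nonneg t), Real.sqrt_sq ht.le]
  calc a * √(u * (u + c)) + b * √(v * (v + c))
      = √(a * u * (a * (u + c))) + √(b * v * (b * (v + c))) := by
        rw [sqrt_scale ha, sqrt_scale hb]
    _ < √((a * u + b * v) * (a * (u + c) + b * (v + c))) :=
        sqrt_mul_add_sqrt_mul_lt (by positivity) (by positivity) (by positivity)
          (by positivity) hne
    _ = √((a * u + b * v) * (a * u + b * v + c)) := by
        congr 2
        linear_combination c * hab

theorem phi_sqrt {u : ℝ} (hu : 0 ≤ u) : phi √u = √(u * (u + 1)) - u := by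
  rw [phi, mul_sub, Real.mul_self_sqrt hu, Real.sq_sqrt hu, add_comm 1 u, Real.sqrt_mul hu]

theorem strictConcaveOn_phi_sqrt : StrictConcaveOn ℝ (Ici 0) fun u : ℝ ↦ phi √u :=
  ((strictConcaveOn_sqrt_mul_add one_pos).sub_convexOn (convexOn_id (convex_Ici 0))).congr
    fun _ hu ↦ (phi_sqrt hu).symm

/-- For `0 < σ₁ < σ₂`, the function
`J(ξ) = φ(ξ) − φ(σ₁) − ((φ(σ₂) − φ(σ₁))/(σ₂² − σ₁²))(ξ² − σ₁²)` is positive on `(σ₁, σ₂)`. -/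
theorem J_pos_two (σ₁ σ₂ : ℝ) (hσ₁ : 0 < σ₁) (hσ₁₂ : σ₁ < σ₂) :
    ∀ ξ ∈ Set.Ioo σ₁ σ₂,
      0 < phi ξ - phi σ₁ - ((phi σ₂ - phi σ₁) / (σ₂ ^ 2 - σ₁ ^ 2)) * (ξ ^ 2 - σ₁ ^ 2) := by
  rintro ξ ⟨hσ₁ξ, hξσ₂⟩
  have hξ : 0 < ξ := hσ₁.trans hσ₁ξ
  have hσ₂ : 0 < σ₂ := hσ₁.trans hσ₁₂
  have hsq₁ : σ₁ ^ 2 < ξ ^ 2 := by gcongr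
  have hsq₂ : ξ ^ 2 < σ₂ ^ 2 := by gcongr
  have slope_lt : (phi σ₂ - phi σ₁) / (σ₂ ^ 2 - σ₁ ^ 2) < (phi ξ - phi σ₁) / (ξ ^ 2 - σ₁ ^ 2) := by
    simpa only [Real.sqrt_sq hσ₁.le, Real.sqrt_sq hξ.le, Real.sqrt_sq hσ₂.le] using
      strictConcaveOn_phi_sqrt.secant_strict_mono (sq_nonneg σ₁) (sq_nonneg ξ) (sq_nonneg σ₂)
        hsq₁.ne' (hsq₁.trans hsq₂).ne' hsq₂
  exact sub_pos.mpr ((lt_div_iff₀ (sub_pos.mpr hsq₁)).mp slope_lt)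
end

section
/- Let V₀, E₀ ∈ ℝ with k₀ := E₀ + V₀²/2 > 0, let ε ∈ {+1, −1}, and define on (0,∞): θ(ξ) = ε·√(2 k₀ φ(ξ)), V(ξ) = V₀, and P(ξ) = (k₀ − V₀²/2) − k₀ ξ/√(1+ξ²). Then θ is continuously differentiable on (0,∞), the triple (θ, V, P) satisfies the stationary self-similar axisymmetric Euler system on (0,∞), namely (θ²/2 + (1+ξ²)P)' = −ξV², V'·θ = 0 and (θ² − ξ(θ²/2)' + P)' = 0, and moreover θ(ξ) → 0 as ξ → 0⁺ and θ'(ξ) → 0 as ξ → ∞. -/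
open Set Filter

/-!
In the hyperbolic parameter `ξ = sinh t` one has `√(1 + ξ²) - ξ = e⁻ᵗ`, hence
`φ = (1 - e⁻²ᵗ) / 2`, which gives the positivity, the smoothness and the limits of `φ` and `φ'`.
When `θ² / 2 = k φ` and `P = c - k ξ / √(1 + ξ²)`, the identities
`φ + ξ² = (1 + ξ²) ξ / √(1 + ξ²)` and `2 φ - ξ φ' = ξ / √(1 + ξ²)` turn the expressions
differentiated in the Euler system into the polynomials `c + (c - k) ξ²` and `c`.
The choice `c = k - V₀² / 2` matches the swirl term.
-/

open Real Topology

lemma tendsto_deriv_sqrt {l : Filter ℝ} {f f' : ℝ → ℝ} {a b : ℝ} (ha : 0 < a)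
    (hderiv : ∀ᶠ x in l, HasDerivAt f (f' x) x) (hf : Tendsto f l (𝓝 a))
    (hf' : Tendsto f' l (𝓝 b)) :
    Tendsto (deriv fun x => √(f x)) l (𝓝 (b / (2 * √a))) := by
  have hquot : Tendsto (fun x => f' x / (2 * √(f x))) l (𝓝 (b / (2 * √a))) :=
    hf'.div (hf.sqrt.const_mul 2) (by positivity)
  refine hquot.congr' ?_
  filter_upwards [hderiv, hf.eventually_ne ha.ne'] with x hfx hne
  exact (hfx.sqrt hne).deriv.symm

lemma tendsto_sqrt_one_add_sq_atTop : Tendsto (fun x : ℝ => √(1 + x ^ 2)) atTop atTop :=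
  tendsto_sqrt_atTop.comp (tendsto_atTop_add_const_left _ 1 (tendsto_pow_atTop two_ne_zero))

lemma tendsto_exp_neg_two_mul_arsinh_atTop :
    Tendsto (fun x => exp (-2 * arsinh x)) atTop (𝓝 0) :=
  tendsto_exp_atBot.comp
    (sinhOrderIso.symm.tendsto_atTop.const_mul_atTop_of_neg (by norm_num : (-2 : ℝ) < 0))

lemma exp_neg_two_mul_arsinh (x : ℝ) : exp (-2 * arsinh x) = (√(1 + x ^ 2) - x) ^ 2 := by
  have hexp : √(1 + x ^ 2) - x = exp (-arsinh x) := by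
    rw [← cosh_sub_sinh, cosh_arsinh, sinh_arsinh]
  rw [hexp, ← exp_nat_mul]
  push_cast
  ring_nf

lemma phi_eq_exp_arsinh (x : ℝ) : phi x = (1 - exp (-2 * arsinh x)) / 2 := by
  have hsq : √(1 + x ^ 2) ^ 2 = 1 + x ^ 2 := sq_sqrt (by positivity)
  rw [exp_neg_two_mul_arsinh, phi]
  linear_combination hsq / 2

lemma phi_pos {x : ℝ} (hx : 0 < x) : 0 < phi x := by
  have harsinh : 0 < arsinh x := arsinh_pos_iff.2 hx
  have hexp : exp (-2 * arsinh x) < 1 := exp_lt_one_iff.2 (by linarith)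
  rw [phi_eq_exp_arsinh]
  linarith

lemma contDiff_phi {n : WithTop ℕ∞} : ContDiff ℝ n phi := by
  rw [funext phi_eq_exp_arsinh]
  fun_prop

lemma hasDerivAt_phi (x : ℝ) :
    HasDerivAt phi (exp (-2 * arsinh x) / √(1 + x ^ 2)) x := by
  rw [funext phi_eq_exp_arsinh]
  refine ((((hasDerivAt_arsinh x).const_mul (-2)).exp.const_sub 1).div_const 2).congr_deriv ?_
  ring

lemma tendsto_phi_atTop : Tendsto phi atTop (𝓝 (1 / 2)) := by
  rw [funext phi_eq_exp_arsinh]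
  simpa using (tendsto_exp_neg_two_mul_arsinh_atTop.const_sub 1).div_const 2

lemma phi_add_sq (x : ℝ) : phi x + x ^ 2 = (1 + x ^ 2) * (x / √(1 + x ^ 2)) := by
  rw [mul_div_left_comm, div_sqrt, phi]
  ring

lemma two_mul_phi_sub_self_mul_deriv (x : ℝ) :
    2 * phi x - x * deriv phi x = x / √(1 + x ^ 2) := by
  have hsq : √(1 + x ^ 2) ^ 2 = 1 + x ^ 2 := sq_sqrt (by positivity)
  rw [(hasDerivAt_phi x).deriv, exp_neg_two_mul_arsinh, phi]
  field_simp
  linear_combination x * hsq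

lemma tendsto_deriv_sqrt_const_mul_phi_atTop {a : ℝ} (ha : 0 < a) :
    Tendsto (deriv fun x => √(a * phi x)) atTop (𝓝 0) := by
  have hlim : Tendsto (fun x => a * (exp (-2 * arsinh x) / √(1 + x ^ 2))) atTop (𝓝 0) := by
    simpa using (tendsto_exp_neg_two_mul_arsinh_atTop.div_atTop
      tendsto_sqrt_one_add_sq_atTop).const_mul a
  simpa using tendsto_deriv_sqrt (by positivity)
    (.of_forall fun x => (hasDerivAt_phi x).const_mul a)
    (tendsto_phi_atTop.const_mul a) hlim

lemma contDiffOn_sqrt_const_mul_phi {a : ℝ} (ha : 0 < a) {n : WithTop ℕ∞} :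
    ContDiffOn ℝ n (fun x => √(a * phi x)) (Ioi 0) :=
  (contDiff_const.mul contDiff_phi).contDiffOn.sqrt fun _ hx => (mul_pos ha (phi_pos hx)).ne'

lemma tendsto_sqrt_const_mul_phi_zero (a : ℝ) :
    Tendsto (fun x => √(a * phi x)) (𝓝 0) (𝓝 0) := by
  have hcont : Continuous fun x => √(a * phi x) :=
    (continuous_const.mul (contDiff_phi (n := 0)).continuous).sqrt
  simpa [phi] using hcont.tendsto 0

section FirstIntegrals

variable {k c ξ : ℝ} {θ P : ℝ → ℝ}

lemma hasDerivAt_half_sq_add_one_add_sq_mul (hθ : ∀ᶠ s in 𝓝 ξ, θ s ^ 2 / 2 = k * phi s)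
    (hP : ∀ᶠ s in 𝓝 ξ, P s = c - k * s / √(1 + s ^ 2)) :
    HasDerivAt (fun s => θ s ^ 2 / 2 + (1 + s ^ 2) * P s) (2 * (c - k) * ξ) ξ := by
  have hpoly : (fun s => θ s ^ 2 / 2 + (1 + s ^ 2) * P s) =ᶠ[𝓝 ξ]
      fun s => c + (c - k) * s ^ 2 := by
    filter_upwards [hθ, hP] with s hθs hPs
    rw [hθs, hPs]
    linear_combination k * phi_add_sq s
  refine HasDerivAt.congr_of_eventuallyEq ?_ hpoly
  refine (((hasDerivAt_pow 2 ξ).const_mul (c - k)).const_add c).congr_deriv ?_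
  push_cast
  ring

lemma sq_sub_self_mul_deriv_half_sq_add_eventuallyEq_const
    (hθ : ∀ᶠ s in 𝓝 ξ, θ s ^ 2 / 2 = k * phi s)
    (hP : ∀ᶠ s in 𝓝 ξ, P s = c - k * s / √(1 + s ^ 2)) :
    (fun s => θ s ^ 2 - s * deriv (fun t => θ t ^ 2 / 2) s + P s) =ᶠ[𝓝 ξ] fun _ => c := by
  filter_upwards [hθ.eventually_nhds, hP] with s hθs hPs
  have hderiv : deriv (fun t => θ t ^ 2 / 2) s = k * deriv phi s := by
    rw [EventuallyEq.deriv_eq hθs, deriv_const_mul_field]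
  rw [hderiv, hPs]
  linear_combination 2 * hθs.self_of_nhds + k * two_mul_phi_sub_self_mul_deriv s

end FirstIntegrals

/-- The explicit family `θ = ε √(2k₀φ)`, `V ≡ V₀`, `P = (k₀ − V₀²/2) − k₀ ξ/√(1+ξ²)` with
`k₀ = E₀ + V₀²/2 > 0` is a classical solution of the stationary self-similar axisymmetric
Euler system on `(0,∞)`, with `θ → 0` at `0⁺` and `θ' → 0` at `∞`. -/
theorem euler_explicit_solution (V₀ E₀ : ℝ) (k₀ : ℝ) (hk₀def : k₀ = E₀ + V₀ ^ 2 / 2)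
    (hk₀ : 0 < k₀) (ε : ℝ) (hε : ε = 1 ∨ ε = -1) (θ V P : ℝ → ℝ)
    (hθ : ∀ ξ, θ ξ = ε * Real.sqrt (2 * k₀ * phi ξ))
    (hV : ∀ ξ, V ξ = V₀)
    (hP : ∀ ξ, P ξ = (k₀ - V₀ ^ 2 / 2) - k₀ * ξ / Real.sqrt (1 + ξ ^ 2)) :
    ContDiffOn ℝ 1 θ (Set.Ioi 0) ∧
    (∀ ξ ∈ Set.Ioi (0 : ℝ),
      deriv (fun s => θ s ^ 2 / 2 + (1 + s ^ 2) * P s) ξ = -ξ * V ξ ^ 2) ∧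
    (∀ ξ ∈ Set.Ioi (0 : ℝ), deriv V ξ * θ ξ = 0) ∧
    (∀ ξ ∈ Set.Ioi (0 : ℝ),
      deriv (fun s => θ s ^ 2 - s * deriv (fun t => θ t ^ 2 / 2) s + P s) ξ = 0) ∧
    Tendsto θ (nhdsWithin 0 (Set.Ioi 0)) (nhds 0) ∧
    Tendsto (deriv θ) atTop (nhds 0) := by
  have hθf : θ = fun ξ => ε * √(2 * k₀ * phi ξ) := funext hθ
  have h2k₀ : 0 < 2 * k₀ := by positivity
  have hθ_sq : ∀ ξ > 0, ∀ᶠ s in 𝓝 ξ, θ s ^ 2 / 2 = k₀ * phi s := by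
    intro ξ hξ
    filter_upwards [Ioi_mem_nhds hξ] with s hs
    rw [hθ, mul_pow, sq_eq_one_iff.2 hε, sq_sqrt (mul_pos h2k₀ (phi_pos hs)).le]
    ring
  refine ⟨?_, fun ξ hξ => ?_, fun ξ _ => ?_, fun ξ hξ => ?_, ?_, ?_⟩
  · rw [hθf]
    exact contDiffOn_const.mul (contDiffOn_sqrt_const_mul_phi h2k₀)
  · rw [(hasDerivAt_half_sq_add_one_add_sq_mul (hθ_sq ξ hξ) (.of_forall hP)).deriv, hV]
    ring
  · rw [funext hV, deriv_const, zero_mul]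
  · have hconst := sq_sub_self_mul_deriv_half_sq_add_eventuallyEq_const (hθ_sq ξ hξ) (.of_forall hP)
    rw [hconst.deriv_eq, deriv_const]
  · rw [hθf]
    simpa using ((tendsto_sqrt_const_mul_phi_zero (2 * k₀)).const_mul ε).mono_left
      nhdsWithin_le_nhds
  · rw [hθf, deriv_const_mul_field']
    simpa using (tendsto_deriv_sqrt_const_mul_phi_atTop h2k₀).const_mul ε
end

section
/- Let ν > 0, V∞ > 0, let Θ : [0,1) → ℝ be continuous, and let V ∈ C²([0,1)) satisfy ν V''(x) = Θ(x) V'(x) on (0,1), with V(0) = 0 and V(x) → V∞ as x → 1⁻. Then V is strictly increasing on [0,1) and 0 < V(x) < V∞ for every x ∈ (0,1). -/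
open Set Filter

/-! By the integrating factor `exp (-∫ Θ / ν)`, the derivative `V'`, which solves a first-order
homogeneous linear equation, is a constant multiple of a positive function. Since `V` grows from
`0` to a positive limit, the mean value theorem gives a point where `V'` is positive; hence it is
positive everywhere. -/

section FirstOrderLinear

variable {E : Type*} [NormedAddCommGroup E] [NormedSpace ℝ E] {s : Set ℝ} {x₀ x : ℝ}

theorem hasDerivAt_integral_of_continuousOn [CompleteSpace E] {f : ℝ → E} (hs : IsOpen s)
    (hs' : IsPreconnected s) (hf : ContinuousOn f s) (hx₀ : x₀ ∈ s) (hx : x ∈ s) :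
    HasDerivAt (fun y => ∫ t in x₀..y, f t) (f x) x :=
  intervalIntegral.integral_hasDerivAt_right
    (hf.mono (hs'.ordConnected.uIcc_subset hx₀ hx)).intervalIntegrable
    (hf.stronglyMeasurableAtFilter hs x hx) (hf.continuousAt (hs.mem_nhds hx))

theorem hasDerivAt_exp_neg_smul_zero {w : ℝ → E} {Q : ℝ → ℝ} {q : ℝ} (hQ : HasDerivAt Q q x)
    (hw : HasDerivAt w (q • w x) x) : HasDerivAt (fun y => Real.exp (-Q y) • w y) 0 x := by
  refine (hQ.fun_neg.exp.fun_smul hw).congr_deriv ?_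
  module

theorem eq_exp_integral_smul_of_hasDerivAt_smul {w : ℝ → E} {q : ℝ → ℝ} (hs : IsOpen s)
    (hs' : IsPreconnected s) (hq : ContinuousOn q s)
    (hw : ∀ y ∈ s, HasDerivAt w (q y • w y) y) (hx₀ : x₀ ∈ s) (hx : x ∈ s) :
    w x = Real.exp (∫ t in x₀..x, q t) • w x₀ := by
  set Q : ℝ → ℝ := fun y => ∫ t in x₀..y, q t
  have hderiv : ∀ y ∈ s, HasDerivAt (fun y => Real.exp (-Q y) • w y) 0 y := fun y hy =>
    hasDerivAt_exp_neg_smul_zero (hasDerivAt_integral_of_continuousOn hs hs' hq hx₀ hy) (hw y hy)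
  have hconst : Real.exp (-Q x) • w x = w x₀ := by
    simpa [Q] using hs.is_const_of_deriv_eq_zero hs'
      (fun y hy => (hderiv y hy).differentiableAt.differentiableWithinAt)
      (fun y hy => (hderiv y hy).deriv) hx hx₀
  rw [← hconst, smul_smul, ← Real.exp_add, add_neg_cancel, Real.exp_zero, one_smul]

theorem pos_of_hasDerivAt_mul_self {w q : ℝ → ℝ} (hs : IsOpen s) (hs' : IsPreconnected s)
    (hq : ContinuousOn q s) (hw : ∀ y ∈ s, HasDerivAt w (q y * w y) y) (hx₀ : x₀ ∈ s)
    (hpos : 0 < w x₀) (hx : x ∈ s) : 0 < w x := by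
  rw [eq_exp_integral_smul_of_hasDerivAt_smul hs hs' hq hw hx₀ hx]
  exact smul_pos (Real.exp_pos _) hpos

end FirstOrderLinear

theorem strictMonoOn_of_hasDerivAt_mul_self_of_lt {D : Set ℝ} {f f' q : ℝ → ℝ} {a b : ℝ}
    (hD : Convex ℝ D) (hf : ContinuousOn f D) (hf' : ∀ x ∈ interior D, HasDerivAt f (f' x) x)
    (hf'' : ∀ x ∈ interior D, HasDerivAt f' (q x * f' x) x) (hq : ContinuousOn q (interior D))
    (ha : a ∈ D) (hb : b ∈ D) (hab : a < b) (hfab : f a < f b) : StrictMonoOn f D := by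
  have hIcc : Icc a b ⊆ D := hD.ordConnected.out ha hb
  have hIoo : Ioo a b ⊆ interior D :=
    interior_maximal (Ioo_subset_Icc_self.trans hIcc) isOpen_Ioo
  obtain ⟨c, hc, hslope⟩ := exists_hasDerivAt_eq_slope f f' hab (hf.mono hIcc)
    fun x hx => hf' x (hIoo hx)
  have hc_pos : 0 < f' c := hslope ▸ div_pos (sub_pos.2 hfab) (sub_pos.2 hab)
  exact strictMonoOn_of_hasDerivWithinAt_pos hD hf (fun x hx => (hf' x hx).hasDerivWithinAt)
    fun x hx => pos_of_hasDerivAt_mul_self isOpen_interior hD.interior.isPreconnected hq hf''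
      (hIoo hc) hc_pos hx

theorem lt_of_strictMonoOn_Ico_of_tendsto_nhdsLT {α β : Type*} [LinearOrder α] [DenselyOrdered α]
    [TopologicalSpace α] [OrderTopology α] [Preorder β] [TopologicalSpace β]
    [ClosedIciTopology β] {f : α → β} {a b x : α} {l : β} (hf : StrictMonoOn f (Ico a b))
    (hl : Tendsto f (nhdsWithin b (Iio b)) (nhds l)) (hx : x ∈ Ico a b) : f x < l := by
  obtain ⟨y, hxy, hyb⟩ := exists_between hx.2
  have hy : y ∈ Ico a b := ⟨hx.1.trans hxy.le, hyb⟩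
  have : (nhdsWithin b (Iio b)).NeBot := nhdsLT_neBot_of_exists_lt ⟨y, hyb⟩
  have hyl : f y ≤ l := ge_of_tendsto hl <| by
    filter_upwards [Ioo_mem_nhdsLT hyb] with z hz
    exact (hf hy ⟨hy.1.trans hz.1.le, hz.2⟩ hz.1).le
  exact (hf hx hy hxy).trans_le hyl

theorem hasDerivAt_deriv_of_contDiffOn_two {𝕜 F : Type*} [NontriviallyNormedField 𝕜]
    [NormedAddCommGroup F] [NormedSpace 𝕜 F] {f : 𝕜 → F} {s : Set 𝕜} {x : 𝕜}
    (hf : ContDiffOn 𝕜 2 f s) (hx : x ∈ interior s) :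
    HasDerivAt f (deriv f x) x ∧ HasDerivAt (deriv f) (deriv (deriv f) x) x := by
  have hfx : ContDiffAt 𝕜 2 f x := hf.contDiffAt (mem_interior_iff_mem_nhds.1 hx)
  exact ⟨(hfx.differentiableAt two_ne_zero).hasDerivAt,
    ((hfx.derivWithin (m := 1) one_add_one_eq_two.le).differentiableAt one_ne_zero).hasDerivAt⟩

theorem swirl_strictMono_general {a b ν l : ℝ} {Θ V V' V'' : ℝ → ℝ} (hab : a < b) (hν : ν ≠ 0)
    (hΘ : ContinuousOn Θ (Ioo a b)) (hV : ContinuousOn V (Ico a b))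
    (hV' : ∀ x ∈ Ioo a b, HasDerivAt V (V' x) x) (hV'' : ∀ x ∈ Ioo a b, HasDerivAt V' (V'' x) x)
    (hODE : ∀ x ∈ Ioo a b, ν * V'' x = Θ x * V' x) (hl : V a < l)
    (hlim : Tendsto V (nhdsWithin b (Iio b)) (nhds l)) :
    StrictMonoOn V (Ico a b) ∧ ∀ x ∈ Ioo a b, V a < V x ∧ V x < l := by
  have hlin : ∀ x ∈ Ioo a b, HasDerivAt V' (Θ x / ν * V' x) x := fun x hx =>
    (hV'' x hx).congr_deriv <| by rw [div_mul_eq_mul_div, eq_div_iff hν, mul_comm, hODE x hx]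
  obtain ⟨c, hVc, hc⟩ : ∃ c, V a < V c ∧ c ∈ Ioo a b :=
    ((hlim.eventually (lt_mem_nhds hl)).and (Ioo_mem_nhdsLT hab)).exists
  have ha : a ∈ Ico a b := left_mem_Ico.2 hab
  have hmono : StrictMonoOn V (Ico a b) := by
    rw [← interior_Ico] at hV' hlin hΘ
    exact strictMonoOn_of_hasDerivAt_mul_self_of_lt (convex_Ico a b) hV hV' hlin
      (hΘ.div_const ν) ha (Ioo_subset_Ico_self hc) hc.1 hVc
  refine ⟨hmono, fun x hx => ?_⟩
  have hx' : x ∈ Ico a b := Ioo_subset_Ico_self hx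
  exact ⟨hmono ha hx' hx.1, lt_of_strictMonoOn_Ico_of_tendsto_nhdsLT hmono hlim hx'⟩

/-- If `ν > 0`, `V∞ > 0`, `Θ` is continuous on `[0,1)` and `V ∈ C²([0,1))` satisfies
`ν V'' = Θ V'` on `(0,1)` with `V(0) = 0` and `V(x) → V∞` as `x → 1⁻`, then `V` is strictly
increasing on `[0,1)` and `0 < V(x) < V∞` on `(0,1)`. -/
theorem swirl_strictMono (ν Vinf : ℝ) (hν : 0 < ν) (hVinf : 0 < Vinf)
    (Θ V : ℝ → ℝ)
    (hΘ : ContinuousOn Θ (Set.Ico 0 1))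
    (hV : ContDiffOn ℝ 2 V (Set.Ico 0 1))
    (hODE : ∀ x ∈ Set.Ioo (0 : ℝ) 1, ν * deriv (deriv V) x = Θ x * deriv V x)
    (hV0 : V 0 = 0)
    (hV1 : Tendsto V (nhdsWithin 1 (Set.Iio 1)) (nhds Vinf)) :
    StrictMonoOn V (Set.Ico 0 1) ∧ ∀ x ∈ Set.Ioo (0 : ℝ) 1, 0 < V x ∧ V x < Vinf := by
  have hderiv := fun x (hx : x ∈ Ioo (0 : ℝ) 1) =>
    hasDerivAt_deriv_of_contDiffOn_two hV (interior_Ico (a := (0 : ℝ)) ▸ hx)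
  simpa only [hV0] using swirl_strictMono_general one_pos hν.ne' (hΘ.mono Ioo_subset_Ico_self)
    hV.continuousOn (fun x hx => (hderiv x hx).1) (fun x hx => (hderiv x hx).2) hODE
    (hV0.trans_lt hVinf) hV1
end

section
/- Let ν > 0, E₀ > 0, let H : [0,1] → ℝ be continuous with H(x) > 0 for all x ∈ [0,1), and let Θ ∈ C¹([0,1)) satisfy ν Θ'(x) = Θ(x)²/2 − (x/(1−x²)²)·(H(x) + E₀(1−x)) on [0,1) with Θ(0) = 0. Then Θ(x) < 0 for every x ∈ (0,1). -/
open Set Filter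

/-!
The forcing term is positive on `(0, 1)`, so there `Θ' < (2ν)⁻¹ Θ²`. Reading the right-hand side as
`a Θ` with the coefficient `a = (2ν)⁻¹ Θ` regarded as known makes this a linear differential
inequality: if `A' = a`, then `Θ exp (-A)` is strictly decreasing, and it starts at `0`.
-/

theorem exists_continuousOn_hasDerivAt_Icc {E : Type*} [NormedAddCommGroup E] [NormedSpace ℝ E]
    [CompleteSpace E] {a : ℝ → E} {s t : ℝ} (hst : s ≤ t) (ha : ContinuousOn a (Icc s t)) :
    ∃ A : ℝ → E, ContinuousOn A (Icc s t) ∧ ∀ x ∈ Ioo s t, HasDerivAt A (a x) x := by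
  refine ⟨fun x ↦ ∫ u in s..x, a u, ?_, fun x hx ↦ ?_⟩
  · rw [← uIcc_of_le hst] at ha ⊢
    exact intervalIntegral.continuousOn_primitive_interval ha.integrableOn_uIcc
  · have ha_left : ContinuousOn a (uIcc s x) :=
      ha.mono (uIcc_of_le hx.1.le ▸ Icc_subset_Icc_right hx.2.le)
    exact intervalIntegral.integral_hasDerivAt_right ha_left.intervalIntegrable
      ((ha.mono Ioo_subset_Icc_self).stronglyMeasurableAtFilter isOpen_Ioo x hx)
      (ha.continuousAt (Icc_mem_nhds hx.1 hx.2))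

section LinearDifferentialInequality

variable {f f' a : ℝ → ℝ} {s t : ℝ}

theorem strictAntiOn_mul_exp_neg {A : ℝ → ℝ} {D : Set ℝ} (hD : Convex ℝ D)
    (hf : ContinuousOn f D) (hA : ContinuousOn A D)
    (hf' : ∀ x ∈ interior D, HasDerivAt f (f' x) x)
    (hA' : ∀ x ∈ interior D, HasDerivAt A (a x) x)
    (hlt : ∀ x ∈ interior D, f' x < a x * f x) :
    StrictAntiOn (fun x ↦ f x * Real.exp (-A x)) D := by
  have hderiv : ∀ x ∈ interior D, HasDerivAt (fun x ↦ f x * Real.exp (-A x))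
      ((f' x - a x * f x) * Real.exp (-A x)) x := fun x hx ↦
    ((hf' x hx).mul (hA' x hx).neg.exp).congr_deriv (by simp only [Pi.neg_apply]; ring)
  exact strictAntiOn_of_hasDerivWithinAt_neg hD (hf.mul hA.neg.rexp)
    (fun x hx ↦ (hderiv x hx).hasDerivWithinAt)
    (fun x hx ↦ mul_neg_of_neg_of_pos (sub_neg.2 (hlt x hx)) (Real.exp_pos _))

theorem neg_of_hasDerivAt_lt_mul (hst : s < t) (hf : ContinuousOn f (Icc s t))
    (ha : ContinuousOn a (Icc s t)) (hf' : ∀ x ∈ Ioo s t, HasDerivAt f (f' x) x)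
    (hlt : ∀ x ∈ Ioo s t, f' x < a x * f x) (hs : f s ≤ 0) : f t < 0 := by
  obtain ⟨A, hA, hA'⟩ := exists_continuousOn_hasDerivAt_Icc hst.le ha
  rw [← interior_Icc] at hf' hA' hlt
  have hanti := strictAntiOn_mul_exp_neg (convex_Icc s t) hf hA hf' hA' hlt
  have hneg : f t * Real.exp (-A t) < 0 :=
    calc f t * Real.exp (-A t)
      _ < f s * Real.exp (-A s) := hanti (left_mem_Icc.2 hst.le) (right_mem_Icc.2 hst.le) hst
      _ ≤ 0 := mul_nonpos_of_nonpos_of_nonneg hs (Real.exp_pos _).le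
  exact neg_of_mul_neg_left hneg (Real.exp_pos _).le

theorem neg_of_hasDerivAt_lt_mul_sq {c : ℝ} (hst : s < t) (hf : ContinuousOn f (Icc s t))
    (hf' : ∀ x ∈ Ioo s t, HasDerivAt f (f' x) x)
    (hlt : ∀ x ∈ Ioo s t, f' x < c * f x ^ 2) (hs : f s ≤ 0) : f t < 0 :=
  neg_of_hasDerivAt_lt_mul hst hf (hf.const_mul c) hf'
    (fun x hx ↦ (hlt x hx).trans_eq (by ring)) hs

end LinearDifferentialInequality

theorem Theta_neg_general {ν : ℝ} (hν : 0 < ν) {P Θ : ℝ → ℝ}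
    (hP : ∀ x ∈ Ioo (0 : ℝ) 1, 0 < P x) (hcont : ContinuousOn Θ (Ico 0 1))
    (hdiff : DifferentiableOn ℝ Θ (Ioo 0 1))
    (hODE : ∀ x ∈ Ioo (0 : ℝ) 1,
      ν * deriv Θ x = Θ x ^ 2 / 2 - (x / (1 - x ^ 2) ^ 2) * P x)
    (hΘ0 : Θ 0 ≤ 0) :
    ∀ x ∈ Ioo (0 : ℝ) 1, Θ x < 0 := by
  have hlt : ∀ x ∈ Ioo (0 : ℝ) 1, deriv Θ x < (2 * ν)⁻¹ * Θ x ^ 2 := by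
    intro x hx
    have hforcing : 0 < x / (1 - x ^ 2) ^ 2 * P x :=
      mul_pos (div_pos hx.1 (pow_pos (by nlinarith [hx.1, hx.2]) 2)) (hP x hx)
    rw [← mul_lt_mul_iff_right₀ hν]
    calc ν * deriv Θ x
      _ < Θ x ^ 2 / 2 := by linarith [hODE x hx]
      _ = ν * ((2 * ν)⁻¹ * Θ x ^ 2) := by field_simp
  intro b hb
  have hsub : Ioo 0 b ⊆ Ioo 0 1 := Ioo_subset_Ioo_right hb.2.le
  exact neg_of_hasDerivAt_lt_mul_sq hb.1 (hcont.mono (Icc_subset_Ico_right hb.2))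
    (fun x hx ↦ (hdiff.differentiableAt (Ioo_mem_nhds hx.1 (hsub hx).2)).hasDerivAt)
    (fun x hx ↦ hlt x (hsub hx)) hΘ0

/-- If `E₀ > 0`, `H` is continuous and positive on `[0,1)`, and `Θ ∈ C¹([0,1))` solves the
Riccati equation `ν Θ' = Θ²/2 − (x/(1−x²)²)(H(x) + E₀(1−x))` with `Θ(0) = 0`, then
`Θ(x) < 0` on `(0,1)`. -/
theorem Theta_neg (ν E₀ : ℝ) (hν : 0 < ν) (hE₀ : 0 < E₀)
    (H : ℝ → ℝ) (hHcont : ContinuousOn H (Set.Icc 0 1))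
    (hHpos : ∀ x ∈ Set.Ico (0 : ℝ) 1, 0 < H x)
    (Θ : ℝ → ℝ) (hΘreg : ContDiffOn ℝ 1 Θ (Set.Ico 0 1))
    (hODE : ∀ x ∈ Set.Ico (0 : ℝ) 1,
      ν * deriv Θ x = Θ x ^ 2 / 2 - (x / (1 - x ^ 2) ^ 2) * (H x + E₀ * (1 - x)))
    (hΘ0 : Θ 0 = 0) :
    ∀ x ∈ Set.Ioo (0 : ℝ) 1, Θ x < 0 := by
  have hP : ∀ x ∈ Ioo (0 : ℝ) 1, 0 < H x + E₀ * (1 - x) := fun x hx ↦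
    add_pos (hHpos x (Ioo_subset_Ico_self hx)) (mul_pos hE₀ (sub_pos.2 hx.2))
  exact Theta_neg_general hν hP hΘreg.continuousOn
    ((hΘreg.differentiableOn one_ne_zero).mono Ioo_subset_Ico_self)
    (fun x hx ↦ hODE x (Ioo_subset_Ico_self hx)) hΘ0.le
end

section
/- Let ν > 0, E₀ ∈ ℝ and β > 0 with β + E₀ > 0. Let H : [0,1] → ℝ be continuous with 0 ≤ H(x) ≤ β(1−x) for all x ∈ [0,1], and let Θ ∈ C¹([0,1)) satisfy ν Θ'(x) = Θ(x)²/2 − (x/(1−x²)²)·(H(x) + E₀(1−x)) on [0,1) with Θ(0) = 0. Then Θ(x) > −√(2(β + E₀)) · √(x − x²)/(1−x²) for every x ∈ (0,1). -/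
open Set Filter

/-!
Fix `x ∈ (0, 1)` and let `-M` be the claimed bound at `x`. The forcing term is at most
`(β + E₀) (t - t²) / (1 - t²)²`, which increases in `t`, so on `[0, x]` it is at most `M² / 2` and
`ν Θ' ≥ (Θ² - M²) / 2`. The right-hand side is convex in `Θ`, hence lies above its tangent at the
equilibrium `-M`: `ν (Θ + M)' ≥ -M (Θ + M)`. Thus `exp (M t / ν) (Θ + M)` is nondecreasing, and
it is positive at `0`.
-/

theorem monotoneOn_exp_mul_of_neg_mul_le_deriv {D : Set ℝ} (hD : Convex ℝ D) {y : ℝ → ℝ} {c : ℝ}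
    (hcont : ContinuousOn y D) (hdiff : DifferentiableOn ℝ y (interior D))
    (hderiv : ∀ t ∈ interior D, -(c * y t) ≤ deriv y t) :
    MonotoneOn (fun t ↦ Real.exp (c * t) * y t) D := by
  have hprod : ∀ t ∈ interior D, HasDerivAt (fun t ↦ Real.exp (c * t) * y t)
      (Real.exp (c * t) * (deriv y t + c * y t)) t := by
    intro t ht
    have hexp : HasDerivAt (fun t ↦ Real.exp (c * t)) (Real.exp (c * t) * c) t := by
      simpa using ((hasDerivAt_id t).const_mul c).exp
    have hy : HasDerivAt y (deriv y t) t :=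
      (hdiff.differentiableAt (isOpen_interior.mem_nhds ht)).hasDerivAt
    exact (hexp.fun_mul hy).congr_deriv (by ring)
  refine monotoneOn_of_hasDerivWithinAt_nonneg hD (by fun_prop)
    (fun t ht ↦ (hprod t ht).hasDerivWithinAt) fun t ht ↦ ?_
  exact mul_nonneg (Real.exp_nonneg _) (by linarith [hderiv t ht])

theorem pos_of_neg_mul_le_deriv {y : ℝ → ℝ} {a b c : ℝ} (hab : a ≤ b)
    (hcont : ContinuousOn y (Icc a b)) (hdiff : DifferentiableOn ℝ y (Ioo a b))
    (hderiv : ∀ t ∈ Ioo a b, -(c * y t) ≤ deriv y t) (ha : 0 < y a) : 0 < y b := by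
  rw [← interior_Icc] at hdiff hderiv
  have hmono := monotoneOn_exp_mul_of_neg_mul_le_deriv (convex_Icc a b) hcont hdiff hderiv
    (left_mem_Icc.2 hab) (right_mem_Icc.2 hab) hab
  have hpos : 0 < Real.exp (c * b) * y b := (mul_pos (Real.exp_pos _) ha).trans_le hmono
  exact pos_of_mul_pos_right hpos (Real.exp_nonneg _)

theorem neg_lt_of_riccati_le_deriv {u f : ℝ → ℝ} {a b k M : ℝ} (hab : a ≤ b) (hk : 0 ≤ k)
    (hcont : ContinuousOn u (Icc a b)) (hdiff : DifferentiableOn ℝ u (Ioo a b))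
    (hf : ∀ t ∈ Ioo a b, f t ≤ M ^ 2)
    (hderiv : ∀ t ∈ Ioo a b, k * (u t ^ 2 - f t) ≤ deriv u t) (ha : -M < u a) : -M < u b := by
  suffices 0 < u b + M by linarith
  refine pos_of_neg_mul_le_deriv (y := fun t ↦ u t + M) (c := 2 * k * M) hab
    (hcont.add_const M) (hdiff.add_const M) (fun t ht ↦ ?_) (by linarith)
  rw [deriv_add_const]
  calc -(2 * k * M * (u t + M))
      ≤ -(2 * k * M * (u t + M)) + k * (u t + M) ^ 2 := by
        linarith [mul_nonneg hk (sq_nonneg (u t + M))]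
    _ = k * (u t ^ 2 - M ^ 2) := by ring
    _ ≤ k * (u t ^ 2 - f t) := by gcongr; exact hf t ht
    _ ≤ deriv u t := hderiv t ht

/-- The profile of the lower barrier: the bound for `Θ` is `-√(2 (β + E₀))` times this function. -/
noncomputable def barrierProfile (x : ℝ) : ℝ := √(x - x ^ 2) / (1 - x ^ 2)

theorem barrierProfile_pos {x : ℝ} (hx : x ∈ Ioo 0 1) : 0 < barrierProfile x := by
  obtain ⟨hx0, hx1⟩ := hx
  exact div_pos (Real.sqrt_pos.2 (by nlinarith)) (by nlinarith)

theorem barrierProfile_sq {x : ℝ} (hx : x ∈ Icc 0 1) :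
    barrierProfile x ^ 2 = x * (1 - x) / (1 - x ^ 2) ^ 2 := by
  obtain ⟨hx0, hx1⟩ := hx
  rw [barrierProfile, div_pow, Real.sq_sqrt (by nlinarith)]
  ring

theorem monotoneOn_barrierProfile_sq : MonotoneOn (fun x ↦ barrierProfile x ^ 2) (Ico 0 1) := by
  have hfactor : ∀ x ∈ Ico (0 : ℝ) 1,
      barrierProfile x ^ 2 = x / (1 + x) ^ 2 * (1 / (1 - x)) := by
    intro x hx
    have hpos : 0 < 1 - x := sub_pos.2 hx.2
    have hpos' : 0 < 1 + x := by linarith [hx.1]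
    rw [barrierProfile_sq (Ico_subset_Icc_self hx), show 1 - x ^ 2 = (1 - x) * (1 + x) by ring]
    field_simp
  intro x hx y hy hxy
  have hx0 : 0 ≤ x := hx.1
  have hy0 : 0 ≤ y := hy.1
  have hx1 : 0 < 1 - x := sub_pos.2 hx.2
  have hy1 : 0 < 1 - y := sub_pos.2 hy.2
  have hrational : x / (1 + x) ^ 2 ≤ y / (1 + y) ^ 2 := by
    rw [div_le_div_iff₀ (by positivity) (by positivity)]
    have hxy1 : x * y ≤ 1 := mul_le_one₀ hx.2.le hy0 hy.2.le
    linarith [mul_nonneg (sub_nonneg.2 hxy) (sub_nonneg.2 hxy1)]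
  simp only [hfactor x hx, hfactor y hy]
  gcongr

theorem forcing_le_mul_barrierProfile_sq {x h E₀ β : ℝ} (hx : x ∈ Icc 0 1)
    (hh : h ≤ β * (1 - x)) :
    x / (1 - x ^ 2) ^ 2 * (h + E₀ * (1 - x)) ≤ (β + E₀) * barrierProfile x ^ 2 := by
  have hx0 : 0 ≤ x := hx.1
  calc x / (1 - x ^ 2) ^ 2 * (h + E₀ * (1 - x))
      ≤ x / (1 - x ^ 2) ^ 2 * (β * (1 - x) + E₀ * (1 - x)) := by gcongr
    _ = (β + E₀) * barrierProfile x ^ 2 := by rw [barrierProfile_sq hx]; ring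

theorem Theta_lower_bound_general {ν E₀ β : ℝ} (hν : 0 < ν) (hβE : 0 < β + E₀) {H Θ : ℝ → ℝ}
    (hH : ∀ x ∈ Ioo (0 : ℝ) 1, H x ≤ β * (1 - x))
    (hcont : ContinuousOn Θ (Ico 0 1)) (hdiff : DifferentiableOn ℝ Θ (Ioo 0 1))
    (hderiv : ∀ x ∈ Ioo (0 : ℝ) 1,
      Θ x ^ 2 / 2 - (x / (1 - x ^ 2) ^ 2) * (H x + E₀ * (1 - x)) ≤ ν * deriv Θ x)
    (hΘ0 : 0 ≤ Θ 0) {x : ℝ} (hx : x ∈ Ioo 0 1) :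
    -√(2 * (β + E₀)) * √(x - x ^ 2) / (1 - x ^ 2) < Θ x := by
  set M := √(2 * (β + E₀)) * barrierProfile x with hM
  have hM_pos : 0 < M := mul_pos (Real.sqrt_pos.2 (by positivity)) (barrierProfile_pos hx)
  have hM_sq : M ^ 2 = 2 * ((β + E₀) * barrierProfile x ^ 2) := by
    rw [hM, mul_pow, Real.sq_sqrt (by positivity), mul_assoc]
  have hsub : Ioo 0 x ⊆ Ioo 0 1 := Ioo_subset_Ioo_right hx.2.le
  suffices -M < Θ x by rwa [neg_mul, neg_div, mul_div_assoc]
  refine neg_lt_of_riccati_le_deriv (k := (2 * ν)⁻¹)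
    (f := fun t ↦ 2 * (t / (1 - t ^ 2) ^ 2 * (H t + E₀ * (1 - t)))) hx.1.le (by positivity)
    (hcont.mono (Icc_subset_Ico_right hx.2)) (hdiff.mono hsub) (fun t ht ↦ ?_) (fun t ht ↦ ?_)
    (by linarith)
  · have hmono : barrierProfile t ^ 2 ≤ barrierProfile x ^ 2 :=
      monotoneOn_barrierProfile_sq (Ioo_subset_Ico_self (hsub ht)) (Ioo_subset_Ico_self hx) ht.2.le
    have hforcing := forcing_le_mul_barrierProfile_sq (E₀ := E₀) (Ioo_subset_Icc_self (hsub ht))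
      (hH t (hsub ht))
    rw [hM_sq]
    linarith [mul_le_mul_of_nonneg_left hmono hβE.le]
  · rw [inv_mul_le_iff₀ (by positivity)]
    linarith [hderiv t (hsub ht)]

/-- Lower bound for solutions of the Riccati equation: if `β + E₀ > 0`, `0 ≤ H(x) ≤ β(1−x)`
on `[0,1]`, and `Θ ∈ C¹([0,1))` solves `ν Θ' = Θ²/2 − (x/(1−x²)²)(H(x) + E₀(1−x))` with
`Θ(0) = 0`, then `Θ(x) > −√(2(β+E₀)) √(x−x²)/(1−x²)` on `(0,1)`. -/
theorem Theta_lower_bound (ν E₀ β : ℝ) (hν : 0 < ν) (hβ : 0 < β) (hβE : 0 < β + E₀)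
    (H : ℝ → ℝ) (hHcont : ContinuousOn H (Set.Icc 0 1))
    (hHbd : ∀ x ∈ Set.Icc (0 : ℝ) 1, 0 ≤ H x ∧ H x ≤ β * (1 - x))
    (Θ : ℝ → ℝ) (hΘreg : ContDiffOn ℝ 1 Θ (Set.Ico 0 1))
    (hODE : ∀ x ∈ Set.Ico (0 : ℝ) 1,
      ν * deriv Θ x = Θ x ^ 2 / 2 - (x / (1 - x ^ 2) ^ 2) * (H x + E₀ * (1 - x)))
    (hΘ0 : Θ 0 = 0) :
    ∀ x ∈ Set.Ioo (0 : ℝ) 1,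
      -Real.sqrt (2 * (β + E₀)) * Real.sqrt (x - x ^ 2) / (1 - x ^ 2) < Θ x := by
  intro x hx
  exact Theta_lower_bound_general hν hβE (fun t ht ↦ (hHbd t (Ioo_subset_Icc_self ht)).2)
    hΘreg.continuousOn ((hΘreg.differentiableOn one_ne_zero).mono Ioo_subset_Ico_self)
    (fun t ht ↦ (hODE t (Ioo_subset_Ico_self ht)).ge) hΘ0.ge hx
end

section
/- Let ν > 0, V∞ > 0 and E₀ ∈ ℝ with E₀ + V∞²/2 > 0. Let H : [0,1] → ℝ be continuous with 0 ≤ H(x) ≤ (V∞²/2)(1−x) for all x ∈ [0,1], and let Θ ∈ C¹([0,1)) satisfy ν Θ'(x) = Θ(x)²/2 − (x/(1−x²)²)·(H(x) + E₀(1−x)) on [0,1) with Θ(0) = 0. Then, independently of ν, Θ(x) > −√(2E₀ + V∞²) · √(x(1−x))/(1−x²) for every x ∈ (0,1). -/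
open Set Filter

/-!
Fix `x ∈ (0, 1)`. Bounding `H` by `(V∞²/2)(1 - t)` makes `Θ` a supersolution of
`ν Θ' = (Θ² - g)/2` with `g t = (2E₀ + V∞²) t (1 - t)/(1 - t²)²`. As `g` is increasing, freezing it
at `g x = m²`, `m = -√(g x) < 0`, leaves `Θ` a supersolution on `[0, x]` of an autonomous Riccati
equation with equilibrium `m`. The tangent line to `s ↦ s²/2` at `m` gives `ν (Θ - m)' ≥ m (Θ - m)`,
so `Θ - m`, positive at `0`, decays at most exponentially and is still positive at `x`.
The viscosity only enters the decay rate, hence the uniformity in `ν`.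
-/

theorem mul_exp_le_of_mul_le_deriv {f : ℝ → ℝ} {a b k : ℝ}
    (hf : ContinuousOn f (Icc a b)) (hf' : DifferentiableOn ℝ f (Ioo a b))
    (hderiv : ∀ t ∈ Ioo a b, k * f t ≤ deriv f t) :
    ∀ t ∈ Icc a b, f a * Real.exp (k * (t - a)) ≤ f t := by
  have hasDerivAt_weighted : ∀ t ∈ Ioo a b, HasDerivAt (fun s ↦ f s * Real.exp (-(k * (s - a))))
      ((deriv f t - k * f t) * Real.exp (-(k * (t - a)))) t := by
    intro t ht
    have hft := (hf'.differentiableAt (Ioo_mem_nhds ht.1 ht.2)).hasDerivAt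
    have hexp := (((hasDerivAt_id t).sub_const a).const_mul k).neg.exp
    exact (hft.mul hexp).congr_deriv (by simp only [Pi.neg_apply, id]; ring)
  have mono : MonotoneOn (fun s ↦ f s * Real.exp (-(k * (s - a)))) (Icc a b) := by
    refine monotoneOn_of_deriv_nonneg (convex_Icc a b) (by fun_prop) ?_ ?_ <;> rw [interior_Icc]
    · exact fun t ht ↦ (hasDerivAt_weighted t ht).differentiableAt.differentiableWithinAt
    · intro t ht
      rw [(hasDerivAt_weighted t ht).deriv]
      exact mul_nonneg (sub_nonneg.2 (hderiv t ht)) (Real.exp_nonneg _)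
  intro t ht
  have weighted_le : f a ≤ f t * Real.exp (-(k * (t - a))) := by
    simpa using mono (left_mem_Icc.2 (ht.1.trans ht.2)) ht ht.1
  rwa [Real.exp_neg, ← div_eq_mul_inv, le_div_iff₀ (Real.exp_pos _)] at weighted_le

theorem lt_of_riccati_supersolution {Θ : ℝ → ℝ} {ν m a b : ℝ} (hν : 0 < ν)
    (hΘ : ContinuousOn Θ (Icc a b)) (hΘ' : DifferentiableOn ℝ Θ (Ioo a b))
    (hRiccati : ∀ t ∈ Ioo a b, (Θ t ^ 2 - m ^ 2) / 2 ≤ ν * deriv Θ t) (ha : m < Θ a) :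
    ∀ t ∈ Icc a b, m < Θ t := by
  have linearized : ∀ t ∈ Ioo a b, m / ν * (Θ t - m) ≤ deriv (fun s ↦ Θ s - m) t := by
    intro t ht
    rw [deriv_sub_const, div_mul_eq_mul_div, div_le_iff₀ hν]
    linarith [hRiccati t ht, sq_nonneg (Θ t - m)]
  intro t ht
  have decay := mul_exp_le_of_mul_le_deriv (hΘ.sub continuousOn_const)
    (hΘ'.sub_const m) linearized t ht
  exact sub_pos.1 ((mul_pos (sub_pos.2 ha) (Real.exp_pos _)).trans_le decay)

theorem neg_sqrt_lt_of_riccati_supersolution_of_monotoneOn {Θ g : ℝ → ℝ} {ν a b : ℝ}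
    (hν : 0 < ν) (hab : a ≤ b)
    (hΘ : ContinuousOn Θ (Icc a b)) (hΘ' : DifferentiableOn ℝ Θ (Ioo a b))
    (hg : MonotoneOn g (Icc a b))
    (hRiccati : ∀ t ∈ Ioo a b, (Θ t ^ 2 - g t) / 2 ≤ ν * deriv Θ t) (ha : -√(g b) < Θ a) :
    -√(g b) < Θ b := by
  refine lt_of_riccati_supersolution hν hΘ hΘ' (fun t ht ↦ ?_) ha b (right_mem_Icc.2 hab)
  have frozen : g t ≤ (-√(g b)) ^ 2 := calc
    g t ≤ g b := hg (Ioo_subset_Icc_self ht) (right_mem_Icc.2 hab) ht.2.le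
    _ ≤ (-√(g b)) ^ 2 := by rw [neg_sq]; exact (Real.sqrt_le_left (Real.sqrt_nonneg _)).1 le_rfl
  linarith [hRiccati t ht]

theorem monotoneOn_mul_one_sub_div_one_sub_sq_sq :
    MonotoneOn (fun t : ℝ ↦ t * (1 - t) / (1 - t ^ 2) ^ 2) (Ico 0 1) := by
  have cancel : ∀ r ∈ Ico (0 : ℝ) 1,
      r * (1 - r) / (1 - r ^ 2) ^ 2 = r / ((1 - r) * (1 + r) ^ 2) := by
    intro r ⟨hr0, hr1⟩
    have : 0 < 1 - r := sub_pos.2 hr1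
    rw [show 1 - r ^ 2 = (1 - r) * (1 + r) by ring]
    field_simp
  intro s hs t ht hst
  simp only [cancel s hs, cancel t ht]
  obtain ⟨hs0, hs1⟩ := hs
  obtain ⟨ht0, ht1⟩ := ht
  have : 0 < 1 - s := sub_pos.2 hs1
  have : 0 < 1 - t := sub_pos.2 ht1
  rw [div_le_div_iff₀ (by positivity) (by positivity), ← sub_nonneg]
  calc
    0 ≤ (t - s) * (1 + s * t + s * t * (s + t)) := mul_nonneg (sub_nonneg.2 hst) (by positivity)
    _ = t * ((1 - s) * (1 + s) ^ 2) - s * ((1 - t) * (1 + t) ^ 2) := by ring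

theorem Theta_lower_bound_uniform_general {ν V E₀ : ℝ} {H Θ : ℝ → ℝ} (hν : 0 < ν)
    (hE : 0 < E₀ + V ^ 2 / 2) (hH : ∀ x ∈ Ioo (0 : ℝ) 1, H x ≤ V ^ 2 / 2 * (1 - x))
    (hΘ : ContinuousOn Θ (Ico 0 1)) (hΘ' : DifferentiableOn ℝ Θ (Ioo 0 1))
    (hsuper : ∀ x ∈ Ioo (0 : ℝ) 1,
      Θ x ^ 2 / 2 - (x / (1 - x ^ 2) ^ 2) * (H x + E₀ * (1 - x)) ≤ ν * deriv Θ x)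
    (hΘ0 : 0 ≤ Θ 0) :
    ∀ x ∈ Ioo (0 : ℝ) 1, -√(2 * E₀ + V ^ 2) * √(x * (1 - x)) / (1 - x ^ 2) < Θ x := by
  intro x ⟨hx0, hx1⟩
  have hc : 0 < 2 * E₀ + V ^ 2 := by linarith
  have : 0 < 1 - x := sub_pos.2 hx1
  have hxsq : 0 < 1 - x ^ 2 := by nlinarith
  let g : ℝ → ℝ := fun t ↦ (2 * E₀ + V ^ 2) * (t * (1 - t) / (1 - t ^ 2) ^ 2)
  have barrier_eq : -√(2 * E₀ + V ^ 2) * √(x * (1 - x)) / (1 - x ^ 2) = -√(g x) := by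
    rw [Real.sqrt_mul hc.le, Real.sqrt_div' _ (sq_nonneg _), Real.sqrt_sq hxsq.le]
    ring
  have g_mono : MonotoneOn g (Icc 0 x) :=
    ((monotone_mul_left_of_nonneg hc.le).comp_monotoneOn
      monotoneOn_mul_one_sub_div_one_sub_sq_sq).mono (Icc_subset_Ico_right hx1)
  have riccati : ∀ t ∈ Ioo 0 x, (Θ t ^ 2 - g t) / 2 ≤ ν * deriv Θ t := by
    intro t ⟨ht0, htx⟩
    have ht : t ∈ Ioo (0 : ℝ) 1 := ⟨ht0, htx.trans hx1⟩
    have forcing_le : t / (1 - t ^ 2) ^ 2 * (H t + E₀ * (1 - t)) ≤ g t / 2 := calc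
      _ ≤ t / (1 - t ^ 2) ^ 2 * (V ^ 2 / 2 * (1 - t) + E₀ * (1 - t)) := by gcongr; exact hH t ht
      _ = g t / 2 := by ring
    linarith [hsuper t ht]
  have start : -√(g x) < Θ 0 := (neg_neg_of_pos (Real.sqrt_pos.2 (by positivity))).trans_le hΘ0
  rw [barrier_eq]
  exact neg_sqrt_lt_of_riccati_supersolution_of_monotoneOn hν hx0.le
    (hΘ.mono (Icc_subset_Ico_right hx1)) (hΘ'.mono (Ioo_subset_Ioo_right hx1.le))
    g_mono riccati start

/-- Viscosity-independent lower bound: if `E₀ + V∞²/2 > 0`, `0 ≤ H(x) ≤ (V∞²/2)(1−x)` on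
`[0,1]`, and `Θ ∈ C¹([0,1))` solves `ν Θ' = Θ²/2 − (x/(1−x²)²)(H(x) + E₀(1−x))` with
`Θ(0) = 0`, then `Θ(x) > −√(2E₀+V∞²) √(x(1−x))/(1−x²)` on `(0,1)`, independently of `ν`. -/
theorem Theta_lower_bound_uniform (ν Vinf E₀ : ℝ) (hν : 0 < ν) (hVinf : 0 < Vinf)
    (hE : 0 < E₀ + Vinf ^ 2 / 2)
    (H : ℝ → ℝ) (hHcont : ContinuousOn H (Set.Icc 0 1))
    (hHbd : ∀ x ∈ Set.Icc (0 : ℝ) 1, 0 ≤ H x ∧ H x ≤ Vinf ^ 2 / 2 * (1 - x))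
    (Θ : ℝ → ℝ) (hΘreg : ContDiffOn ℝ 1 Θ (Set.Ico 0 1))
    (hODE : ∀ x ∈ Set.Ico (0 : ℝ) 1,
      ν * deriv Θ x = Θ x ^ 2 / 2 - (x / (1 - x ^ 2) ^ 2) * (H x + E₀ * (1 - x)))
    (hΘ0 : Θ 0 = 0) :
    ∀ x ∈ Set.Ioo (0 : ℝ) 1,
      -Real.sqrt (2 * E₀ + Vinf ^ 2) * Real.sqrt (x * (1 - x)) / (1 - x ^ 2) < Θ x :=
  Theta_lower_bound_uniform_general hν hE
    (fun x hx ↦ (hHbd x (Ioo_subset_Icc_self hx)).2) hΘreg.continuousOn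
    ((hΘreg.differentiableOn one_ne_zero).mono Ioo_subset_Ico_self)
    (fun x hx ↦ (hODE x (Ioo_subset_Ico_self hx)).ge) hΘ0.ge
end

section
/- Let V∞ > 0, let ν_k → 0 be a sequence of positive numbers, and for each k let Θ_{ν_k} : [0,1) → ℝ be continuous with Θ_{ν_k} ≤ 0; set G_{ν_k}(x) = ∫₀ˣ Θ_{ν_k}(s) ds and let π_{ν_k} be the Borel measure on [0,1) with Lebesgue density V∞ e^{G_{ν_k}(x)/ν_k} / ∫₀¹ e^{G_{ν_k}(t)/ν_k} dt. Assume G_{ν_k} → G uniformly on every compact subset of [0,1), where G is continuous, nonincreasing and G(0) = 0, and assume π_{ν_k} converges weak-* to a finite Borel measure π on [0,1). Then supp π ⊆ S := {x ∈ [0,1) : G(x) = 0}, i.e. the support of π is contained in the set where G attains its maximum value 0. -/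
open Set Filter MeasureTheory intervalIntegral

/-- `x` lies in the support of the measure `μ`: every open neighbourhood of `x` has positive
measure. -/
def MemSupport (μ : Measure ℝ) (x : ℝ) : Prop :=
  ∀ U : Set ℝ, IsOpen U → x ∈ U → 0 < μ U

/-! The measures `π_ν / V∞` are the exponential tiltings of Lebesgue measure by `G_ν / ν`. If
`G x < a < b < G z`, then for small `ν` one has `G_ν ≤ a` near `x` and `b ≤ G_ν` near `z`, so the
normalising integral is at least a constant multiple of `e^{b/ν}` and the tilted mass near `x` is
`O(e^{(a - b)/ν})`. A test function concentrated near `x` carries this decay over to the weak-*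
limit; hence only maximisers of `G` lie in its support. -/

open scoped Topology NNReal ENNReal

section Tilted

variable {X ι : Type*} {mX : MeasurableSpace X} {μ : Measure X}

lemma exp_mul_measureReal_le_integral_exp {f : X → ℝ} (hf : Integrable (fun x ↦ Real.exp (f x)) μ)
    {t : Set X} (ht : MeasurableSet t) (htop : μ t ≠ ∞) {b : ℝ} (hb : ∀ᵐ x ∂μ, x ∈ t → b ≤ f x) :
    Real.exp b * μ.real t ≤ ∫ x, Real.exp (f x) ∂μ :=
  calc Real.exp b * μ.real t = ∫ _ in t, Real.exp b ∂μ := by simp [mul_comm]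
    _ ≤ ∫ x in t, Real.exp (f x) ∂μ :=
      setIntegral_mono_on_ae (integrableOn_const htop) hf.integrableOn ht
        (hb.mono fun x hx hxt ↦ Real.exp_le_exp.2 (hx hxt))
    _ ≤ ∫ x, Real.exp (f x) ∂μ :=
      setIntegral_le_integral hf (.of_forall fun x ↦ (Real.exp_pos (f x)).le)

lemma setIntegral_exp_le_exp_mul_measureReal {f : X → ℝ} {u : Set X} (htop : μ u ≠ ∞) {a : ℝ}
    (ha : ∀ᵐ x ∂μ, x ∈ u → f x ≤ a) :
    ∫ x in u, Real.exp (f x) ∂μ ≤ Real.exp a * μ.real u := by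
  refine (Real.le_norm_self _).trans (norm_setIntegral_le_of_norm_le_const_ae' htop.lt_top ?_)
  filter_upwards [ha] with x hx hxu
  simpa using hx hxu

lemma tilted_apply_le_ofReal_exp_sub {f : X → ℝ} (hf : Integrable (fun x ↦ Real.exp (f x)) μ)
    {u t : Set X} (hu : MeasurableSet u) (hu_top : μ u ≠ ∞) (ht : MeasurableSet t)
    (ht_top : μ t ≠ ∞) (ht_zero : μ t ≠ 0) {a b : ℝ} (ha : ∀ᵐ x ∂μ, x ∈ u → f x ≤ a)
    (hb : ∀ᵐ x ∂μ, x ∈ t → b ≤ f x) :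
    μ.tilted f u ≤ ENNReal.ofReal (Real.exp (a - b) * (μ.real u / μ.real t)) := by
  have ht_pos : 0 < μ.real t := ENNReal.toReal_pos ht_zero ht_top
  rw [tilted_apply_eq_ofReal_integral' f hu, MeasureTheory.integral_div, Real.exp_sub,
    div_mul_div_comm]
  gcongr
  · exact setIntegral_exp_le_exp_mul_measureReal hu_top ha
  · exact exp_mul_measureReal_le_integral_exp hf ht ht_top hb

lemma tendsto_tilted_div_apply_zero {l : Filter ι} {ν : ι → ℝ} (hν : Tendsto ν l (𝓝[>] 0))
    {F : ι → X → ℝ} (hF : ∀ i, Integrable (fun x ↦ Real.exp (F i x / ν i)) μ)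
    {u t : Set X} (hu : MeasurableSet u) (hu_top : μ u ≠ ∞) (ht : MeasurableSet t)
    (ht_top : μ t ≠ ∞) (ht_zero : μ t ≠ 0) {a b : ℝ} (hab : a < b)
    (ha : ∀ᶠ i in l, ∀ᵐ x ∂μ, x ∈ u → F i x ≤ a) (hb : ∀ᶠ i in l, ∀ᵐ x ∂μ, x ∈ t → b ≤ F i x) :
    Tendsto (fun i ↦ μ.tilted (fun x ↦ F i x / ν i) u) l (𝓝 0) := by
  have hbound : ∀ᶠ i in l, μ.tilted (fun x ↦ F i x / ν i) u ≤
      ENNReal.ofReal (Real.exp (a / ν i - b / ν i) * (μ.real u / μ.real t)) := by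
    filter_upwards [ha, hb, hν.eventually self_mem_nhdsWithin] with i hai hbi (hνi : 0 < ν i)
    exact tilted_apply_le_ofReal_exp_sub (hF i) hu hu_top ht ht_top ht_zero
      (hai.mono fun x hx hxu ↦ by gcongr; exact hx hxu)
      (hbi.mono fun x hx hxt ↦ by gcongr; exact hx hxt)
  have hexponent : Tendsto (fun i ↦ a / ν i - b / ν i) l atBot :=
    ((tendsto_inv_nhdsGT_zero.comp hν).const_mul_atTop_of_neg (sub_neg.2 hab)).congr
      fun i ↦ sub_mul a b (ν i)⁻¹
  have hlim := ENNReal.tendsto_ofReal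
    ((Real.tendsto_exp_atBot.comp hexponent).mul_const (μ.real u / μ.real t))
  rw [zero_mul, ENNReal.ofReal_zero] at hlim
  exact tendsto_of_tendsto_of_tendsto_of_le_of_le' tendsto_const_nhds hlim
    (.of_forall fun _ ↦ zero_le) hbound

lemma withDensity_const_mul_exp_div_eq_smul_tilted (C : ℝ) (f : X → ℝ) :
    μ.withDensity (fun x ↦ ENNReal.ofReal (C * Real.exp (f x) / ∫ y, Real.exp (f y) ∂μ)) =
      C.toNNReal • μ.tilted f := by
  have hdensity : (fun x ↦ ENNReal.ofReal (C * Real.exp (f x) / ∫ y, Real.exp (f y) ∂μ)) =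
      ENNReal.ofReal C • fun x ↦ ENNReal.ofReal (Real.exp (f x) / ∫ y, Real.exp (f y) ∂μ) := by
    ext x
    rw [Pi.smul_apply, smul_eq_mul, mul_div_assoc, ENNReal.ofReal_mul' (by positivity)]
  rw [hdensity, withDensity_smul' _ _ ENNReal.ofReal_ne_top]
  rfl

end Tilted

section Support

variable {X ι : Type*} [TopologicalSpace X] [MeasurableSpace X] {l : Filter ι}

lemma closure_interior_subset_support_restrict [OpensMeasurableSpace X] (μ : Measure X)
    [μ.IsOpenPosMeasure] (s : Set X) : closure (interior s) ⊆ (μ.restrict s).support := by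
  refine closure_minimal ?_ Measure.isClosed_support
  simpa [Measure.support_eq_univ] using Measure.interior_inter_support (μ := μ) (s := s)

lemma notMem_support_of_tendsto_apply_zero [R1Space X] [LocallyCompactSpace X]
    [OpensMeasurableSpace X] [l.NeBot] {m : ι → Measure X} {π : Measure X}
    [IsFiniteMeasureOnCompacts π]
    (hweak : ∀ f : X → ℝ, Continuous f → HasCompactSupport f →
      Tendsto (fun i ↦ ∫ x, f x ∂m i) l (𝓝 (∫ x, f x ∂π)))
    {x : X} {U : Set X} (hU : U ∈ 𝓝 x) (hm : Tendsto (fun i ↦ m i U) l (𝓝 0)) :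
    x ∉ π.support := by
  obtain ⟨f, hfx, hf_supp, hfU, hf01⟩ := exists_continuousMap_one_of_isCompact_subset_isOpen
    isCompact_singleton isOpen_interior (singleton_subset_iff.2 (mem_interior_iff_mem_nhds.2 hU))
  have hf_out : ∀ y, y ∉ U → f y = 0 := fun y hy ↦
    image_eq_zero_of_notMem_tsupport fun h ↦ hy (interior_subset (hfU h))
  have hbound : ∀ᶠ i in l, ‖∫ y, f y ∂m i‖ ≤ (m i).real U := by
    filter_upwards [hm.eventually_lt_const ENNReal.zero_lt_top] with i hi
    rw [← setIntegral_eq_integral_of_forall_compl_eq_zero hf_out]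
    simpa using norm_setIntegral_le_of_norm_le_const hi
      fun y _ ↦ (Real.norm_of_nonneg (hf01 y).1).trans_le (hf01 y).2
  have hreal : Tendsto (fun i ↦ (m i).real U) l (𝓝 0) :=
    (ENNReal.tendsto_toReal ENNReal.zero_ne_top).comp hm
  have hzero : ∫ y, f y ∂π = 0 :=
    tendsto_nhds_unique (hweak f f.continuous hf_supp) (squeeze_zero_norm' hbound hreal)
  have hae : ⇑f =ᵐ[π] 0 := (integral_eq_zero_iff_of_nonneg (fun y ↦ (hf01 y).1)
    (f.continuous.integrable_of_hasCompactSupport hf_supp)).1 hzero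
  have hfx_ne : f x ≠ 0 := by simp [hfx (mem_singleton x)]
  exact Measure.notMem_support_iff_exists.2
    ⟨{y | f y ≠ 0}, f.continuous.continuousAt.eventually_ne hfx_ne, ae_iff.1 hae⟩

end Support

section LocallyUniform

variable {X ι : Type*} [TopologicalSpace X] {l : Filter ι} {s : Set X}

lemma exists_isOpen_eventually_forall_mem {Y : Type*} [UniformSpace Y] {F : ι → X → Y} {f : X → Y}
    {x : X} {O : Set Y} (hF : TendstoLocallyUniformlyOn F f l s) (hf : ContinuousWithinAt f s x)
    (hx : x ∈ s) (hO : O ∈ 𝓝 (f x)) :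
    ∃ U, IsOpen U ∧ x ∈ U ∧ ∀ᶠ i in l, ∀ y ∈ U, y ∈ s → F i y ∈ O := by
  have hjoint : Tendsto (fun p : ι × X ↦ F p.1 p.2) (l ×ˢ 𝓝[s] x) (𝓝 (f x)) :=
    tendsto_comp_of_locally_uniform_limit_within (F := fun p : ι × X ↦ F p.1) hf tendsto_snd
      fun v hv ↦ (hF v hv x hx).imp fun _ ht ↦ ⟨ht.1, tendsto_fst.eventually ht.2⟩
  obtain ⟨I, hI, V, hV, hIV⟩ := mem_prod_iff.1 (hjoint hO)
  obtain ⟨U, hU, hxU, hUV⟩ := mem_nhdsWithin.1 hV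
  exact ⟨U, hU, hxU, Filter.mem_of_superset hI fun i hi y hyU hys ↦
    hIV (mk_mem_prod hi (hUV ⟨hyU, hys⟩))⟩

lemma tendstoLocallyUniformlyOn_of_forall_isCompact {Y : Type*} [UniformSpace Y]
    [LocallyCompactSpace X] {F : ι → X → Y} {f : X → Y} (hs : IsLocallyClosed s)
    (hF : ∀ K ⊆ s, IsCompact K → TendstoUniformlyOn F f l K) :
    TendstoLocallyUniformlyOn F f l s := by
  have := hs.locallyCompactSpace
  refine tendstoLocallyUniformlyOn_of_forall_exists_nhds fun x hx ↦ ?_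
  obtain ⟨K, hK, hKx⟩ := exists_compact_mem_nhds (⟨x, hx⟩ : s)
  exact ⟨(↑) '' K, (mem_nhds_subtype_iff_nhdsWithin).1 hKx,
    hF _ (Subtype.coe_image_subset s K) (hK.image continuous_subtype_val)⟩

variable [MeasurableSpace X] [OpensMeasurableSpace X] {μ : Measure X} [IsLocallyFiniteMeasure μ]
  {ν : ι → ℝ} {G : ι → X → ℝ} {g : X → ℝ}

lemma exists_mem_nhds_tendsto_tilted_div_apply_zero (hμs : ∀ᵐ x ∂μ, x ∈ s)
    (hν : Tendsto ν l (𝓝[>] 0)) (hint : ∀ i, Integrable (fun x ↦ Real.exp (G i x / ν i)) μ)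
    (hg : ContinuousOn g s) (hG : TendstoLocallyUniformlyOn G g l s) {x z : X} (hx : x ∈ s)
    (hz : z ∈ s) (hz_supp : z ∈ μ.support) (hlt : g x < g z) :
    ∃ U ∈ 𝓝 x, Tendsto (fun i ↦ μ.tilted (fun y ↦ G i y / ν i) U) l (𝓝 0) := by
  obtain ⟨a, hxa, haz⟩ := exists_between hlt
  obtain ⟨b, hab, hbz⟩ := exists_between haz
  obtain ⟨U, hU, hxU, hGU⟩ := exists_isOpen_eventually_forall_mem hG (hg x hx) hx (Iic_mem_nhds hxa)
  obtain ⟨V, hV, hzV, hGV⟩ := exists_isOpen_eventually_forall_mem hG (hg z hz) hz (Ici_mem_nhds hbz)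
  obtain ⟨A, hxA, hA, hA_top⟩ := μ.exists_isOpen_measure_lt_top x
  obtain ⟨B, hzB, hB, hB_top⟩ := μ.exists_isOpen_measure_lt_top z
  have hVB_pos : 0 < μ (V ∩ B) :=
    (Measure.mem_support_iff_forall z).1 hz_supp _ ((hV.inter hB).mem_nhds ⟨hzV, hzB⟩)
  refine ⟨U ∩ A, (hU.inter hA).mem_nhds ⟨hxU, hxA⟩, tendsto_tilted_div_apply_zero hν hint
    (hU.inter hA).measurableSet (measure_inter_lt_top_of_right_ne_top hA_top.ne).ne
    (hV.inter hB).measurableSet (measure_inter_lt_top_of_right_ne_top hB_top.ne).ne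
    hVB_pos.ne' hab ?_ ?_⟩
  · exact hGU.mono fun i hi ↦ hμs.mono fun y hys hy ↦ hi y hy.1 hys
  · exact hGV.mono fun i hi ↦ hμs.mono fun y hys hy ↦ hi y hy.1 hys

theorem support_subset_max_set_general [R1Space X] [LocallyCompactSpace X] [l.NeBot]
    (hμs : ∀ᵐ x ∂μ, x ∈ s) (hsμ : s ⊆ μ.support)
    (hν : Tendsto ν l (𝓝[>] 0)) (hint : ∀ i, Integrable (fun x ↦ Real.exp (G i x / ν i)) μ)
    (hg : ContinuousOn g s) (hG : TendstoLocallyUniformlyOn G g l s)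
    (C : ℝ≥0) {π : ι → Measure X} (hπ : ∀ i, π i = C • μ.tilted fun x ↦ G i x / ν i)
    {πlim : Measure X} [IsFiniteMeasureOnCompacts πlim]
    (hweak : ∀ f : X → ℝ, Continuous f → HasCompactSupport f →
      Tendsto (fun i ↦ ∫ x, f x ∂π i) l (𝓝 (∫ x, f x ∂πlim))) :
    ∀ x ∈ s, x ∈ πlim.support → IsMaxOn g s x := by
  intro x hx hx_supp z hz
  by_contra hle
  have hlt : g x < g z := not_le.1 hle
  obtain ⟨U, hU, hU_lim⟩ :=
    exists_mem_nhds_tendsto_tilted_div_apply_zero hμs hν hint hg hG hx hz (hsμ hz) hlt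
  have hπU : Tendsto (fun i ↦ π i U) l (𝓝 0) := by
    simpa [hπ] using! ENNReal.Tendsto.const_mul hU_lim (.inr (ENNReal.coe_ne_top (r := C)))
  exact notMem_support_of_tendsto_apply_zero hweak hU hπU hx_supp

end LocallyUniform

section Interval

variable {a b : ℝ}

lemma continuousOn_primitive_Ico {E : Type*} [NormedAddCommGroup E] [NormedSpace ℝ E] {f : ℝ → E}
    (hf : ContinuousOn f (Ico a b)) : ContinuousOn (fun x ↦ ∫ s in a..x, f s) (Ico a b) := by
  intro x hx
  obtain ⟨c, hxc, hcb⟩ := exists_between hx.2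
  have hac : a ≤ c := hx.1.trans hxc.le
  have hint : IntervalIntegrable f volume a c :=
    (hf.mono (Icc_subset_Ico_right hcb)).intervalIntegrable_of_Icc hac
  have hcont := continuousOn_primitive_interval' hint left_mem_uIcc
  rw [uIcc_of_le hac] at hcont
  refine (hcont x ⟨hx.1, hxc.le⟩).mono_of_mem_nhdsWithin ?_
  exact mem_nhdsWithin.2 ⟨Iio c, isOpen_Iio, hxc, fun y hy ↦ ⟨hy.2.1, hy.1.le⟩⟩

lemma integrableOn_exp_primitive_div {f : ℝ → ℝ} (hf : ContinuousOn f (Ico a b))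
    (hf_nonpos : ∀ x ∈ Ico a b, f x ≤ 0) {r : ℝ} (hr : 0 ≤ r) :
    IntegrableOn (fun x ↦ Real.exp ((∫ s in a..x, f s) / r)) (Ico a b) := by
  have hcont : ContinuousOn (fun x ↦ Real.exp ((∫ s in a..x, f s) / r)) (Ico a b) :=
    Real.continuous_exp.comp_continuousOn ((continuousOn_primitive_Ico hf).div_const r)
  refine .of_bound measure_Ico_lt_top (hcont.aestronglyMeasurable measurableSet_Ico) 1 ?_
  filter_upwards [ae_restrict_mem measurableSet_Ico] with x hx
  have hprimitive : ∫ s in a..x, f s ≤ 0 := by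
    rw [integral_of_le hx.1]
    exact setIntegral_nonpos measurableSet_Ioc fun s hs ↦
      hf_nonpos s ⟨hs.1.le, hs.2.trans_lt hx.2⟩
  simpa using div_nonpos_of_nonpos_of_nonneg hprimitive hr

lemma Ico_subset_support_restrict_Ico (a b : ℝ) :
    Ico a b ⊆ (volume.restrict (Ico a b)).support := by
  rcases lt_or_ge a b with hab | hba
  · refine Subset.trans ?_ (closure_interior_subset_support_restrict volume (Ico a b))
    rw [interior_Ico, closure_Ioo hab.ne]
    exact Ico_subset_Icc_self
  · simp [Ico_eq_empty_of_le hba]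

lemma withDensity_Ico_eq_smul_tilted (hab : a ≤ b) (C : ℝ) (f : ℝ → ℝ) :
    (volume.restrict (Ico a b)).withDensity
        (fun x ↦ ENNReal.ofReal (C * Real.exp (f x) / ∫ t in a..b, Real.exp (f t))) =
      C.toNNReal • (volume.restrict (Ico a b)).tilted f := by
  rw [integral_of_le hab, ← integral_Ico_eq_integral_Ioc]
  exact withDensity_const_mul_exp_div_eq_smul_tilted C f

end Interval

lemma MemSupport.mem_support {μ : Measure ℝ} {x : ℝ} (h : MemSupport μ x) : x ∈ μ.support := by
  rw [Measure.support_eq_forall_isOpen]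
  exact fun U hxU hU ↦ h U hU hxU

/-- The support of the weak-* limit `π` of the probability-like measures
`π_ν = V∞ e^{G_ν/ν} dx / ∫₀¹ e^{G_ν/ν}` is contained in the set `S` where the (uniform on
compacts) limit `G` of the `G_ν` attains its maximum value `0`. -/
theorem support_subset_max_set (Vinf : ℝ) (hVinf : 0 < Vinf)
    (ν : ℕ → ℝ) (hν : ∀ k, 0 < ν k) (hν0 : Tendsto ν atTop (nhds 0))
    (Θ : ℕ → ℝ → ℝ)
    (hΘcont : ∀ k, ContinuousOn (Θ k) (Set.Ico 0 1))
    (hΘneg : ∀ k, ∀ x ∈ Set.Ico (0 : ℝ) 1, Θ k x ≤ 0)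
    (G : ℕ → ℝ → ℝ) (hG : ∀ k x, G k x = ∫ s in (0 : ℝ)..x, Θ k s)
    (π : ℕ → Measure ℝ)
    (hπ : ∀ k, π k = (volume.restrict (Set.Ico (0 : ℝ) 1)).withDensity
      (fun x => ENNReal.ofReal
        (Vinf * Real.exp (G k x / ν k) / ∫ t in (0 : ℝ)..1, Real.exp (G k t / ν k))))
    (Glim : ℝ → ℝ)
    (hGlimCont : ContinuousOn Glim (Set.Ico 0 1))
    (hGlimAnti : AntitoneOn Glim (Set.Ico 0 1))
    (hGlim0 : Glim 0 = 0)
    (hGconv : ∀ K : Set ℝ, K ⊆ Set.Ico 0 1 → IsCompact K →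
      TendstoUniformlyOn (fun k => G k) Glim atTop K)
    (πlim : Measure ℝ) (hfin : IsFiniteMeasure πlim)
    (hweak : ∀ f : ℝ → ℝ, Continuous f → HasCompactSupport f →
      Tendsto (fun k => ∫ x, f x ∂(π k)) atTop (nhds (∫ x, f x ∂πlim))) :
    ∀ x ∈ Set.Ico (0 : ℝ) 1, MemSupport πlim x → Glim x = 0 := by
  intro x hx hsupp
  have h0 : (0 : ℝ) ∈ Ico 0 1 := left_mem_Ico.2 one_pos
  have hν' : Tendsto ν atTop (𝓝[>] 0) := tendsto_nhdsWithin_iff.2 ⟨hν0, .of_forall hν⟩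
  have hint (k) : Integrable (fun y ↦ Real.exp (G k y / ν k)) (volume.restrict (Ico 0 1)) := by
    simpa only [hG, IntegrableOn] using
      integrableOn_exp_primitive_div (hΘcont k) (hΘneg k) (hν k).le
  have hmax : IsMaxOn Glim (Ico 0 1) x :=
    support_subset_max_set_general (ae_restrict_mem measurableSet_Ico)
      (Ico_subset_support_restrict_Ico 0 1) hν' hint hGlimCont
      (tendstoLocallyUniformlyOn_of_forall_isCompact isLocallyClosed_Ico hGconv) Vinf.toNNReal
      (fun k ↦ (hπ k).trans (withDensity_Ico_eq_smul_tilted zero_le_one Vinf _))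
      hweak x hx hsupp.mem_support
  exact le_antisymm (hGlim0 ▸ hGlimAnti h0 hx hx.1) (hGlim0 ▸ hmax h0)
end

section
/- Let V∞ > 0, let ν_k → 0 be a sequence of positive numbers, and for each k let Θ_{ν_k} : [0,1) → ℝ be continuous with Θ_{ν_k} ≤ 0; set G_{ν_k}(x) = ∫₀ˣ Θ_{ν_k}(s) ds (so each G_{ν_k} is nonincreasing) and let π_{ν_k} be the Borel measure on [0,1) with Lebesgue density V∞ e^{G_{ν_k}(x)/ν_k} / ∫₀¹ e^{G_{ν_k}(t)/ν_k} dt. Assume π_{ν_k} converges weak-* to a finite Borel measure π on [0,1). If x̄ ∈ supp π and x̄ > 0, then every point x₀ with 0 < x₀ < x̄ also belongs to supp π. -/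
open Set Filter MeasureTheory intervalIntegral

/-!
Let `h = x̄ - x₀ > 0`. If `μ` has a nonincreasing density on `(0, ∞)`, then `∫ f(x - h) dμ ≤ ∫ f dμ`
for every nonnegative `f` supported in `(0, ∞)`, by translation invariance of Lebesgue measure. For
`f` continuous with compact support this inequality passes to the vague limit `π`. If `f` is a bump
at `x₀` inside a neighbourhood `U`, then `f(· - h)` is a bump at `x̄ ∈ supp π`, so the left side is
positive for `π`, and hence so is `π U`.
-/

open scoped ENNReal Topology

theorem memSupport_iff_mem_support {μ : Measure ℝ} {x : ℝ} : MemSupport μ x ↔ x ∈ μ.support := by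
  simp only [(nhds_basis_opens x).mem_measureSupport, MemSupport, and_comm (a := x ∈ _), and_imp]

section Support

variable {X : Type*} [TopologicalSpace X]

theorem exists_continuous_hasCompactSupport_of_mem_nhds [RegularSpace X] [LocallyCompactSpace X]
    {x : X} {U : Set X} (hU : U ∈ 𝓝 x) :
    ∃ f : X → ℝ, Continuous f ∧ HasCompactSupport f ∧ 0 ≤ f ∧ Function.support f ⊆ U ∧ f x ≠ 0 := by
  obtain ⟨V, hVU, hVopen, hxV⟩ := mem_nhds_iff.1 hU
  obtain ⟨f, hf_one, hf_zero, hf_compact, hf_mem⟩ :=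
    exists_continuous_one_zero_of_isCompact (isCompact_singleton (x := x)) hVopen.isClosed_compl
      (disjoint_compl_right_iff_subset.2 (singleton_subset_iff.2 hxV))
  refine ⟨f, f.continuous, hf_compact, fun y => (hf_mem y).1, fun y hy => hVU ?_, ?_⟩
  · exact not_not.1 fun hyV => hy (hf_zero hyV)
  · simp [hf_one (mem_singleton x)]

variable [MeasurableSpace X] {μ : Measure X}

theorem integral_pos_of_mem_support {x : X} (hx : x ∈ μ.support) {f : X → ℝ} (hf : Continuous f)
    (hf_int : Integrable f μ) (hf_nonneg : 0 ≤ f) (hfx : f x ≠ 0) : 0 < ∫ y, f y ∂μ :=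
  (integral_pos_iff_support_of_nonneg hf_nonneg hf_int).2 <|
    (Measure.mem_support_iff_forall x).1 hx _ (hf.isOpen_support.mem_nhds hfx)

end Support

section Translation

variable {A : Type*} [AddGroup A] [MeasurableSpace A]

theorem mem_support_of_forall_integral_comp_sub_le [TopologicalSpace A] [IsTopologicalAddGroup A]
    [LocallyCompactSpace A] [OpensMeasurableSpace A] {μ : Measure A} [IsFiniteMeasureOnCompacts μ]
    {x h : A} {V : Set A} (hV : V ∈ 𝓝 x) (hxh : x + h ∈ μ.support)
    (hle : ∀ f : A → ℝ, Continuous f → HasCompactSupport f → 0 ≤ f → Function.support f ⊆ V →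
      ∫ y, f (y - h) ∂μ ≤ ∫ y, f y ∂μ) :
    x ∈ μ.support := by
  refine (Measure.mem_support_iff_forall x).2 fun U hU => ?_
  obtain ⟨f, hf, hf_compact, hf_nonneg, hf_supp, hfx⟩ :=
    exists_continuous_hasCompactSupport_of_mem_nhds (inter_mem hU hV)
  have hf_int : Integrable f μ := hf.integrable_of_hasCompactSupport hf_compact
  have hfh : Continuous fun y => f (y - h) := hf.comp (Homeomorph.subRight h).continuous
  have hfh_compact : HasCompactSupport fun y => f (y - h) :=
    hf_compact.comp_homeomorph (Homeomorph.subRight h)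
  have hfh_pos : 0 < ∫ y, f (y - h) ∂μ :=
    integral_pos_of_mem_support hxh hfh (hfh.integrable_of_hasCompactSupport hfh_compact)
      (fun y => hf_nonneg (y - h)) (by rwa [add_sub_cancel_right])
  have hf_pos : 0 < ∫ y, f y ∂μ :=
    hfh_pos.trans_le (hle f hf hf_compact hf_nonneg (hf_supp.trans inter_subset_right))
  exact ((integral_pos_iff_support_of_nonneg hf_nonneg hf_int).1 hf_pos).trans_le
    (measure_mono (hf_supp.trans inter_subset_left))

variable [MeasurableAdd A] {μ : Measure A} [μ.IsAddRightInvariant] {ρ : A → ℝ≥0∞} {h : A}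

theorem lintegral_comp_sub_right_withDensity_le (hρ : AEMeasurable ρ μ) {f : A → ℝ≥0∞}
    (hf : Measurable f) (hρh : ∀ x ∈ Function.support f, ρ (x + h) ≤ ρ x) :
    ∫⁻ x, f (x - h) ∂μ.withDensity ρ ≤ ∫⁻ x, f x ∂μ.withDensity ρ := by
  calc
    ∫⁻ x, f (x - h) ∂μ.withDensity ρ = ∫⁻ x, ρ x * f (x - h) ∂μ :=
      lintegral_withDensity_eq_lintegral_mul₀ hρ (hf.comp (measurable_sub_const' h)).aemeasurable
    _ = ∫⁻ x, ρ (x + h) * f x ∂μ := by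
      simpa only [add_sub_cancel_right] using
        (lintegral_add_right_eq_self (μ := μ) (fun x => ρ x * f (x - h)) h).symm
    _ ≤ ∫⁻ x, ρ x * f x ∂μ := by
      refine lintegral_mono fun x => ?_
      rcases eq_or_ne (f x) 0 with hfx | hfx
      · simp only [hfx, mul_zero, le_refl]
      · exact mul_le_mul_left (hρh x hfx) (f x)
    _ = ∫⁻ x, f x ∂μ.withDensity ρ :=
      (lintegral_withDensity_eq_lintegral_mul₀ hρ hf.aemeasurable).symm

theorem integral_comp_sub_right_withDensity_le (hρ : AEMeasurable ρ μ) {f : A → ℝ}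
    (hf : Measurable f) (hf_nonneg : 0 ≤ f) (hf_int : Integrable f (μ.withDensity ρ))
    (hρh : ∀ x ∈ Function.support f, ρ (x + h) ≤ ρ x) :
    ∫ x, f (x - h) ∂μ.withDensity ρ ≤ ∫ x, f x ∂μ.withDensity ρ := by
  rw [integral_eq_lintegral_of_nonneg_ae (.of_forall fun x => hf_nonneg (x - h))
      (hf.comp (measurable_sub_const' h)).aestronglyMeasurable,
    integral_eq_lintegral_of_nonneg_ae (.of_forall hf_nonneg) hf.aestronglyMeasurable]
  refine ENNReal.toReal_mono hf_int.lintegral_lt_top.ne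
    (lintegral_comp_sub_right_withDensity_le hρ hf.ennreal_ofReal fun x hx => hρh x ?_)
  exact fun hfx => hx (by simp only [hfx, ENNReal.ofReal_zero])

end Translation

theorem mem_support_of_tendsto_of_antitoneOn {ι : Type*} {l : Filter ι} [l.NeBot]
    {ρ : ι → ℝ → ℝ≥0∞} {a : ℝ} (hρ : ∀ i, AEMeasurable (ρ i))
    (hρ_anti : ∀ i, AntitoneOn (ρ i) (Ioi a))
    [∀ i, IsFiniteMeasureOnCompacts (volume.withDensity (ρ i))]
    {μ : Measure ℝ} [IsFiniteMeasureOnCompacts μ]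
    (hlim : ∀ f : ℝ → ℝ, Continuous f → HasCompactSupport f →
      Tendsto (fun i => ∫ x, f x ∂volume.withDensity (ρ i)) l (𝓝 (∫ x, f x ∂μ)))
    {x y : ℝ} (hax : a < x) (hxy : x ≤ y) (hy : y ∈ μ.support) : x ∈ μ.support := by
  refine mem_support_of_forall_integral_comp_sub_le (h := y - x) (Ioi_mem_nhds hax)
    (by rwa [add_sub_cancel]) fun f hf hf_compact hf_nonneg hf_supp => ?_
  refine le_of_tendsto_of_tendsto'
    (hlim _ (hf.comp (Homeomorph.subRight (y - x)).continuous)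
      (hf_compact.comp_homeomorph (Homeomorph.subRight (y - x))))
    (hlim f hf hf_compact) fun i => ?_
  refine integral_comp_sub_right_withDensity_le (hρ i) hf.measurable hf_nonneg
    (hf.integrable_of_hasCompactSupport hf_compact) fun z hz => ?_
  have hz_le : z ≤ z + (y - x) := le_add_of_nonneg_right (sub_nonneg.2 hxy)
  exact hρ_anti i (hf_supp hz) ((hf_supp hz).trans_le hz_le) hz_le

theorem antitoneOn_indicator_Ico {α β : Type*} [LinearOrder α] [Preorder β] [Zero β]
    {f : α → β} {a b : α} (hf : AntitoneOn f (Ico a b)) (hf_nonneg : ∀ x ∈ Ico a b, 0 ≤ f x) :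
    AntitoneOn ((Ico a b).indicator f) (Ici a) := by
  intro x hx y hy hxy
  by_cases hyb : y < b
  · have hx_mem : x ∈ Ico a b := ⟨hx, hxy.trans_lt hyb⟩
    have hy_mem : y ∈ Ico a b := ⟨hy, hyb⟩
    simpa only [indicator_of_mem hx_mem, indicator_of_mem hy_mem] using hf hx_mem hy_mem hxy
  · rw [indicator_of_notMem fun hy_mem => hyb hy_mem.2]
    exact indicator_nonneg hf_nonneg x

theorem isFiniteMeasure_withDensity_Ico_of_antitoneOn {α : Type*} [Preorder α] [MeasurableSpace α]
    {μ : Measure α} {ρ : α → ℝ≥0∞} {a b : α} (hμ : μ (Ico a b) ≠ ∞) (hρ : AntitoneOn ρ (Ico a b))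
    (hρa : ρ a ≠ ∞) : IsFiniteMeasure ((μ.restrict (Ico a b)).withDensity ρ) := by
  have hρ_le : ∀ x ∈ Ico a b, ρ x ≤ ρ a := fun x hx =>
    hρ (left_mem_Ico.2 (hx.1.trans_lt hx.2)) hx hx.1
  refine isFiniteMeasure_withDensity
    (ne_top_of_le_ne_top ?_ (setLIntegral_mono measurable_const hρ_le))
  rw [setLIntegral_const]
  exact ENNReal.mul_ne_top hρa hμ

theorem mem_support_of_tendsto_of_antitoneOn_Ico {ι : Type*} {l : Filter ι} [l.NeBot]
    {ρ : ι → ℝ → ℝ≥0∞} {a b : ℝ} (hρ : ∀ i, AntitoneOn (ρ i) (Ico a b)) (hρa : ∀ i, ρ i a ≠ ∞)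
    {μ : Measure ℝ} [IsFiniteMeasureOnCompacts μ]
    (hlim : ∀ f : ℝ → ℝ, Continuous f → HasCompactSupport f →
      Tendsto (fun i => ∫ x, f x ∂(volume.restrict (Ico a b)).withDensity (ρ i)) l
        (𝓝 (∫ x, f x ∂μ)))
    {x y : ℝ} (hax : a < x) (hxy : x ≤ y) (hy : y ∈ μ.support) : x ∈ μ.support := by
  have hfinite i := isFiniteMeasure_withDensity_Ico_of_antitoneOn
    (measure_Ico_lt_top (μ := volume)).ne (hρ i) (hρa i)
  simp only [← withDensity_indicator measurableSet_Ico] at hlim hfinite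
  refine mem_support_of_tendsto_of_antitoneOn (fun i => ?_) (fun i => ?_) hlim hax hxy hy
  · exact (aemeasurable_indicator_iff measurableSet_Ico).2
      (aemeasurable_restrict_of_antitoneOn measurableSet_Ico (hρ i))
  · exact (antitoneOn_indicator_Ico (hρ i) fun _ _ => zero_le).mono Ioi_subset_Ici_self

theorem antitoneOn_intervalIntegral_of_nonpos {f : ℝ → ℝ} {s : Set ℝ} [s.OrdConnected] {a : ℝ}
    (ha : a ∈ s) (hf : LocallyIntegrableOn f s) (hf_nonpos : ∀ x ∈ s, f x ≤ 0) :
    AntitoneOn (fun x => ∫ t in a..x, f t) s := by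
  intro x hx y hy hxy
  have hint {u v : ℝ} (hu : u ∈ s) (hv : v ∈ s) : IntervalIntegrable f volume u v :=
    (hf.integrableOn_compact_subset (OrdConnected.uIcc_subset ‹_› hu hv)
      isCompact_uIcc).intervalIntegrable
  have hxy_nonpos : ∫ t in x..y, f t ≤ 0 := by
    rw [integral_of_le hxy]
    exact setIntegral_nonpos measurableSet_Ioc fun t ht =>
      hf_nonpos t (OrdConnected.out ‹_› hx hy (Ioc_subset_Icc_self ht))
  linarith [integral_add_adjacent_intervals (hint ha hx) (hint hx hy)]

/-- The density `V e^{G/ν} / ∫₀¹ e^{G/ν}` of the swirl measure `π_ν` of total mass `V` on `[0, 1)`,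
where `G` is the primitive of `Θ_ν`. -/
noncomputable def swirlDensity (V ν : ℝ) (G : ℝ → ℝ) (x : ℝ) : ℝ :=
  V * Real.exp (G x / ν) / ∫ t in (0 : ℝ)..1, Real.exp (G t / ν)

theorem antitoneOn_swirlDensity {V ν : ℝ} (hV : 0 ≤ V) (hν : 0 ≤ ν) {G : ℝ → ℝ} {s : Set ℝ}
    (hG : AntitoneOn G s) : AntitoneOn (swirlDensity V ν G) s := by
  intro x hx y hy hxy
  have hZ : 0 ≤ ∫ t in (0 : ℝ)..1, Real.exp (G t / ν) :=
    intervalIntegral.integral_nonneg zero_le_one fun t _ => (Real.exp_pos _).le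
  have hGxy : G y ≤ G x := hG hx hy hxy
  unfold swirlDensity
  gcongr

theorem support_is_interval_general {ι : Type*} {l : Filter ι} [l.NeBot] {V : ℝ} (hV : 0 ≤ V)
    {ν : ι → ℝ} (hν : ∀ i, 0 < ν i) {Θ : ι → ℝ → ℝ}
    (hΘ_int : ∀ i, LocallyIntegrableOn (Θ i) (Ico 0 1))
    (hΘ_nonpos : ∀ i, ∀ x ∈ Ico (0 : ℝ) 1, Θ i x ≤ 0)
    {G : ι → ℝ → ℝ} (hG : ∀ i x, G i x = ∫ s in (0 : ℝ)..x, Θ i s)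
    {π : ι → Measure ℝ}
    (hπ : ∀ i, π i = (volume.restrict (Ico (0 : ℝ) 1)).withDensity
      (fun x => ENNReal.ofReal (swirlDensity V (ν i) (G i) x)))
    {πlim : Measure ℝ} [IsFiniteMeasureOnCompacts πlim]
    (hlim : ∀ f : ℝ → ℝ, Continuous f → HasCompactSupport f →
      Tendsto (fun i => ∫ x, f x ∂π i) l (𝓝 (∫ x, f x ∂πlim)))
    {x₀ xbar : ℝ} (hx₀ : 0 < x₀) (hle : x₀ ≤ xbar) (hmem : MemSupport πlim xbar) :
    MemSupport πlim x₀ := by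
  have hG_anti i : AntitoneOn (G i) (Ico 0 1) := by
    rw [funext (hG i)]
    exact antitoneOn_intervalIntegral_of_nonpos (left_mem_Ico.2 one_pos) (hΘ_int i) (hΘ_nonpos i)
  have hρ_anti i : AntitoneOn (fun x => ENNReal.ofReal (swirlDensity V (ν i) (G i) x)) (Ico 0 1) :=
    ENNReal.ofReal_mono.comp_antitoneOn (antitoneOn_swirlDensity hV (hν i).le (hG_anti i))
  simp only [hπ] at hlim
  exact memSupport_iff_mem_support.2 <| mem_support_of_tendsto_of_antitoneOn_Ico hρ_anti
    (fun _ => ENNReal.ofReal_ne_top) hlim hx₀ hle (memSupport_iff_mem_support.1 hmem)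

/-- Structure of the support of the weak-* limit `π` of the measures
`π_ν = V∞ e^{G_ν/ν} dx / ∫₀¹ e^{G_ν/ν}` with `G_ν(x) = ∫₀ˣ Θ_ν ≤ 0` nonincreasing:
if a point `x̄ > 0` belongs to the support of `π`, then so does every `x₀ ∈ (0, x̄)`. -/
theorem support_is_interval (Vinf : ℝ) (hVinf : 0 < Vinf)
    (ν : ℕ → ℝ) (hν : ∀ k, 0 < ν k) (hν0 : Tendsto ν atTop (nhds 0))
    (Θ : ℕ → ℝ → ℝ)
    (hΘcont : ∀ k, ContinuousOn (Θ k) (Set.Ico 0 1))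
    (hΘneg : ∀ k, ∀ x ∈ Set.Ico (0 : ℝ) 1, Θ k x ≤ 0)
    (G : ℕ → ℝ → ℝ) (hG : ∀ k x, G k x = ∫ s in (0 : ℝ)..x, Θ k s)
    (π : ℕ → Measure ℝ)
    (hπ : ∀ k, π k = (volume.restrict (Set.Ico (0 : ℝ) 1)).withDensity
      (fun x => ENNReal.ofReal
        (Vinf * Real.exp (G k x / ν k) / ∫ t in (0 : ℝ)..1, Real.exp (G k t / ν k))))
    (πlim : Measure ℝ) (hfin : IsFiniteMeasure πlim)
    (hweak : ∀ f : ℝ → ℝ, Continuous f → HasCompactSupport f →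
      Tendsto (fun k => ∫ x, f x ∂(π k)) atTop (nhds (∫ x, f x ∂πlim)))
    (xbar : ℝ) (hxbar : 0 < xbar) (hmem : MemSupport πlim xbar) :
    ∀ x₀ : ℝ, 0 < x₀ → x₀ < xbar → MemSupport πlim x₀ :=
  fun _ hx₀ hlt => support_is_interval_general hVinf.le hν
    (fun k => (hΘcont k).locallyIntegrableOn measurableSet_Ico) hΘneg hG hπ hweak hx₀ hlt.le hmem
end
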